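/- arXiv:2502.06520 — 2 statements merged into one kernel-verified Lean document; each statement's English description precedes it below -/
import Mathlib

section
/- Let Δ be a d-dimensional simplicial complex with a gradient vector field V, let (σ_0^{(k)}, τ_0^{(k−1)}) be a cancellable critical pair for some k ∈ {1,…,d}, and let W be the gradient vector field obtained by cancelling (σ_0, τ_0) from V. Let Crit_k^V(Δ) = {σ_0, σ_1, …, σ_n}, Crit_{k−1}^V(Δ) = {τ_0, τ_1, …, τ_m}, and suppose δ_k^V(τ_i) = Σ_{j=0}^n a_{ji} σ_j for all i ∈ {0,…,m}. Then for all i ∈ {1,…,m}, δ_k^W(τ_i) = Σ_{j=1}^n (a_{ji} − a_{00} a_{0i} a_{j0}) σ_j. -/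
open scoped Classical

/-- A finite abstract simplicial complex on a linearly ordered vertex type:
a finite nonempty collection of finite subsets closed under taking subsets. -/
structure SComplex (V : Type*) [LinearOrder V] where
  faces : Finset (Finset V)
  nonempty' : faces.Nonempty
  downClosed : ∀ σ ∈ faces, ∀ τ ⊆ σ, τ ∈ faces

variable {V : Type*} [LinearOrder V]

/-- `Vf` is a discrete vector field on `Δ`: a collection of pairs `(α, β)` of simplices
with `α ⊊ β`, `dim β = dim α + 1`, such that each simplex is in at most one pair. -/
def IsDVF (Δ : SComplex V) (Vf : Finset (Finset V × Finset V)) : Prop :=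
  (∀ p ∈ Vf, p.1 ∈ Δ.faces ∧ p.2 ∈ Δ.faces ∧ p.1 ⊂ p.2 ∧ p.2.card = p.1.card + 1) ∧
    ∀ p ∈ Vf, ∀ q ∈ Vf, p ≠ q → p.1 ≠ q.1 ∧ p.1 ≠ q.2 ∧ p.2 ≠ q.1 ∧ p.2 ≠ q.2

/-- The incidence number `⟨σ, τ⟩`: it is `(-1)^i` if `τ = σ \ {x_i}` where
`x_0 < x_1 < …` are the vertices of `σ`, and `0` otherwise. -/
noncomputable def incidence (σ τ : Finset V) : ℤ :=
  if τ ⊆ σ ∧ (σ \ τ).card = 1 then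
    (-1) ^ (σ.filter fun y => ∃ x ∈ σ \ τ, y < x).card
  else 0

/-- A `Vf`-trajectory `β₀, α₁, β₁, …, α_r, β_r` from the `q`-simplex `s` to the
`q`-simplex `t`.  Here the field `α i` denotes `α_{i+1}` and `β i` denotes `β_i`
of the usual description. -/
structure Traj (Δ : SComplex V) (Vf : Finset (Finset V × Finset V)) (q : ℕ)
    (s t : Finset V) where
  r : ℕ
  β : Fin (r + 1) → Finset V
  α : Fin r → Finset V
  βmem : ∀ i, β i ∈ Δ.faces
  αmem : ∀ i, α i ∈ Δ.faces
  βcard : ∀ i, (β i).card = q + 1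
  αcard : ∀ i, (α i).card = q
  first : β 0 = s
  last : β (Fin.last r) = t
  sub : ∀ i : Fin r, α i ⊂ β i.castSucc
  vpair : ∀ i : Fin r, (α i, β i.succ) ∈ Vf
  αne : ∀ i : Fin r, ∀ h : (i : ℕ) + 1 < r, α ⟨(i : ℕ) + 1, h⟩ ≠ α i
  βne : ∀ i : Fin r, β i.succ ≠ β i.castSucc

/-- A `Vf`-trajectory `β₀, α₁, β₁, …, α_r, β_r, α_{r+1}` from the `q`-simplex `s`
to the `(q-1)`-simplex `t`.  Here `α i` denotes `α_{i+1}` and `β i` denotes `β_i`. -/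
structure TrajD (Δ : SComplex V) (Vf : Finset (Finset V × Finset V)) (q : ℕ)
    (s t : Finset V) where
  r : ℕ
  β : Fin (r + 1) → Finset V
  α : Fin (r + 1) → Finset V
  βmem : ∀ i, β i ∈ Δ.faces
  αmem : ∀ i, α i ∈ Δ.faces
  βcard : ∀ i, (β i).card = q + 1
  αcard : ∀ i, (α i).card = q
  first : β 0 = s
  last : α (Fin.last r) = t
  sub : ∀ i : Fin (r + 1), α i ⊂ β i
  vpair : ∀ i : Fin r, (α i.castSucc, β i.succ) ∈ Vf
  αne : ∀ i : Fin r, α i.succ ≠ α i.castSucc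
  βne : ∀ i : Fin r, β i.succ ≠ β i.castSucc

/-- A co-`Vf`-trajectory `β₀, τ₁, β₁, …, τ_r, β_r` from the `q`-simplex `s` to the
`q`-simplex `t`.  Here `γ i` denotes `τ_{i+1}` and `β i` denotes `β_i`. -/
structure CoTraj (Δ : SComplex V) (Vf : Finset (Finset V × Finset V)) (q : ℕ)
    (s t : Finset V) where
  r : ℕ
  β : Fin (r + 1) → Finset V
  γ : Fin r → Finset V
  βmem : ∀ i, β i ∈ Δ.faces
  γmem : ∀ i, γ i ∈ Δ.faces
  βcard : ∀ i, (β i).card = q + 1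
  γcard : ∀ i, (γ i).card = q + 2
  first : β 0 = s
  last : β (Fin.last r) = t
  sub : ∀ i : Fin r, β i.castSucc ⊂ γ i
  vpair : ∀ i : Fin r, (β i.succ, γ i) ∈ Vf
  βne : ∀ i : Fin r, β i.castSucc ≠ β i.succ

/-- A co-`Vf`-trajectory `β₀, τ₁, β₁, …, τ_r, β_r, τ_{r+1}` from the `(q-1)`-simplex `s`
to the `q`-simplex `t`.  Here `γ i` denotes `τ_{i+1}` and `β i` denotes `β_i`. -/
structure CoTrajU (Δ : SComplex V) (Vf : Finset (Finset V × Finset V)) (q : ℕ)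
    (s t : Finset V) where
  r : ℕ
  β : Fin (r + 1) → Finset V
  γ : Fin (r + 1) → Finset V
  βmem : ∀ i, β i ∈ Δ.faces
  γmem : ∀ i, γ i ∈ Δ.faces
  βcard : ∀ i, (β i).card = q
  γcard : ∀ i, (γ i).card = q + 1
  first : β 0 = s
  last : γ (Fin.last r) = t
  sub : ∀ i : Fin (r + 1), β i ⊂ γ i
  vpair : ∀ i : Fin r, (β i.succ, γ i.castSucc) ∈ Vf
  βne : ∀ i : Fin r, β i.castSucc ≠ β i.succ
  γne : ∀ i : Fin r, γ i.succ ≠ γ i.castSucc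

/-- The weight `w(P) = ∏ (-⟨β_{i-1}, α_i⟩⟨β_i, α_i⟩)` of a trajectory between
`q`-simplices. -/
noncomputable def wT {Δ : SComplex V} {Vf : Finset (Finset V × Finset V)} {q : ℕ}
    {s t : Finset V} (P : Traj Δ Vf q s t) : ℤ :=
  ∏ i : Fin P.r, -(incidence (P.β i.castSucc) (P.α i) * incidence (P.β i.succ) (P.α i))

/-- The weight `w(P) = (∏ (-⟨β_{i-1}, α_i⟩⟨β_i, α_i⟩)) ⬝ ⟨β_r, α_{r+1}⟩` of a trajectory
from a `q`-simplex to a `(q-1)`-simplex. -/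
noncomputable def wTD {Δ : SComplex V} {Vf : Finset (Finset V × Finset V)} {q : ℕ}
    {s t : Finset V} (P : TrajD Δ Vf q s t) : ℤ :=
  (∏ i : Fin P.r,
      -(incidence (P.β i.castSucc) (P.α i.castSucc) *
        incidence (P.β i.succ) (P.α i.castSucc))) *
    incidence (P.β (Fin.last P.r)) (P.α (Fin.last P.r))

/-- The weight `w(Q) = ∏ (-⟨τ_i, β_{i-1}⟩⟨τ_i, β_i⟩)` of a co-trajectory between
`q`-simplices. -/
noncomputable def wCT {Δ : SComplex V} {Vf : Finset (Finset V × Finset V)} {q : ℕ}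
    {s t : Finset V} (Q : CoTraj Δ Vf q s t) : ℤ :=
  ∏ i : Fin Q.r, -(incidence (Q.γ i) (Q.β i.castSucc) * incidence (Q.γ i) (Q.β i.succ))

/-- The weight `w(Q) = (∏ (-⟨τ_i, β_{i-1}⟩⟨τ_i, β_i⟩)) ⬝ ⟨τ_{r+1}, β_r⟩` of a co-trajectory
from a `(q-1)`-simplex to a `q`-simplex. -/
noncomputable def wCTU {Δ : SComplex V} {Vf : Finset (Finset V × Finset V)} {q : ℕ}
    {s t : Finset V} (Q : CoTrajU Δ Vf q s t) : ℤ :=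
  (∏ i : Fin Q.r,
      -(incidence (Q.γ i.castSucc) (Q.β i.castSucc) *
        incidence (Q.γ i.castSucc) (Q.β i.succ))) *
    incidence (Q.γ (Fin.last Q.r)) (Q.β (Fin.last Q.r))

/-- A gradient vector field: a discrete vector field admitting no nontrivial closed
trajectory. -/
def IsGVF (Δ : SComplex V) (Vf : Finset (Finset V × Finset V)) : Prop :=
  IsDVF Δ Vf ∧ ¬ ∃ (q : ℕ) (s : Finset V) (P : Traj Δ Vf q s s), 0 < P.r

/-- `σ` is a critical simplex of `Δ` with respect to `Vf`: a nonempty simplex that either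
belongs to no pair of `Vf`, or is a `0`-simplex paired with the empty simplex. -/
def IsCrit (Δ : SComplex V) (Vf : Finset (Finset V × Finset V)) (σ : Finset V) : Prop :=
  σ ∈ Δ.faces ∧ σ.Nonempty ∧
    ((∀ p ∈ Vf, σ ≠ p.1 ∧ σ ≠ p.2) ∨ (σ.card = 1 ∧ (∅, σ) ∈ Vf))

/-- The set of critical simplices of cardinality `c` (i.e. of dimension `c - 1`);
so `Crit_q = critC Δ Vf (q + 1)`. -/
noncomputable def critC (Δ : SComplex V) (Vf : Finset (Finset V × Finset V)) (c : ℕ) :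
    Finset (Finset V) :=
  Δ.faces.filter fun σ => σ.card = c ∧ IsCrit Δ Vf σ

/-- The coefficient of the `(q-1)`-simplex `τ` in `∂_q σ`: the sum of the weights of all
trajectories from `σ` to `τ`. -/
noncomputable def bCoeff (Δ : SComplex V) (Vf : Finset (Finset V × Finset V)) (q : ℕ)
    (σ τ : Finset V) : ℤ :=
  ∑ᶠ P : TrajD Δ Vf q σ τ, wTD P

/-- The `q`-th Morse boundary operator `∂_q`, as an endomorphism of the free abelian group
on all simplices; it sends a critical `q`-simplex `σ` to
`∑_{τ ∈ Crit_{q-1}} (∑_{P : σ ⇝ τ} w(P)) ⬝ τ` and non-critical generators to `0`. -/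
noncomputable def morseBoundary (Δ : SComplex V) (Vf : Finset (Finset V × Finset V))
    (q : ℕ) : (Finset V →₀ ℤ) →ₗ[ℤ] (Finset V →₀ ℤ) :=
  Finsupp.lsum ℤ fun σ => LinearMap.toSpanSingleton ℤ (Finset V →₀ ℤ)
    (if σ ∈ critC Δ Vf (q + 1) then
      ∑ τ ∈ critC Δ Vf q, bCoeff Δ Vf q σ τ • Finsupp.single τ (1 : ℤ)
    else 0)

/-- The coefficient of the `q`-simplex `τ` in `δ_q σ`: the sum of the weights of all
co-trajectories from `σ` to `τ`. -/
noncomputable def cbCoeff (Δ : SComplex V) (Vf : Finset (Finset V × Finset V)) (q : ℕ)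
    (σ τ : Finset V) : ℤ :=
  ∑ᶠ Q : CoTrajU Δ Vf q σ τ, wCTU Q

/-- The `q`-th Morse coboundary operator `δ_q`, as an endomorphism of the free abelian
group on all simplices; it sends a critical `(q-1)`-simplex `σ` to
`∑_{τ ∈ Crit_q} (∑_{Q : σ ⇝ τ} w(Q)) ⬝ τ` and non-critical generators to `0`. -/
noncomputable def morseCoboundary (Δ : SComplex V) (Vf : Finset (Finset V × Finset V))
    (q : ℕ) : (Finset V →₀ ℤ) →ₗ[ℤ] (Finset V →₀ ℤ) :=
  Finsupp.lsum ℤ fun σ => LinearMap.toSpanSingleton ℤ (Finset V →₀ ℤ)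
    (if σ ∈ critC Δ Vf q then
      ∑ τ ∈ critC Δ Vf (q + 1), cbCoeff Δ Vf q σ τ • Finsupp.single τ (1 : ℤ)
    else 0)

/-- The vector field `W = (V \ {(α_i, β_i) : 1 ≤ i ≤ r}) ∪ {(α_{i+1}, β_i) : 0 ≤ i ≤ r}`
obtained by cancelling a pair of critical simplices along the trajectory `P0`. -/
noncomputable def cancelPair {Δ : SComplex V} {Vf : Finset (Finset V × Finset V)} {k : ℕ}
    {σ0 τ0 : Finset V} (P0 : TrajD Δ Vf k σ0 τ0) : Finset (Finset V × Finset V) :=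
  (Vf \ Finset.image (fun i : Fin P0.r => (P0.α i.castSucc, P0.β i.succ)) Finset.univ) ∪
    Finset.image (fun i : Fin (P0.r + 1) => (P0.α i, P0.β i)) Finset.univ

/-- The set of simplices appearing in a trajectory. -/
noncomputable def TrajD.simps {Δ : SComplex V} {Vf : Finset (Finset V × Finset V)} {q : ℕ}
    {s t : Finset V} (P : TrajD Δ Vf q s t) : Finset (Finset V) :=
  Finset.image P.β Finset.univ ∪ Finset.image P.α Finset.univ

/-- The set of simplices appearing in a trajectory. -/
noncomputable def Traj.simps {Δ : SComplex V} {Vf : Finset (Finset V × Finset V)} {q : ℕ}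
    {s t : Finset V} (P : Traj Δ Vf q s t) : Finset (Finset V) :=
  Finset.image P.β Finset.univ ∪ Finset.image P.α Finset.univ

/-- The underlying sequence `β₀, α₁, β₁, …, α_r, β_r, α_{r+1}` of a trajectory. -/
noncomputable def TrajD.seq {Δ : SComplex V} {Vf : Finset (Finset V × Finset V)} {q : ℕ}
    {s t : Finset V} (P : TrajD Δ Vf q s t) : List (Finset V) :=
  (List.ofFn fun i : Fin (P.r + 1) => [P.β i, P.α i]).flatten

/-- The underlying sequence `β₀, α₁, β₁, …, α_r, β_r` of a trajectory. -/
noncomputable def Traj.seq {Δ : SComplex V} {Vf : Finset (Finset V × Finset V)} {q : ℕ}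
    {s t : Finset V} (P : Traj Δ Vf q s t) : List (Finset V) :=
  ((List.ofFn fun i : Fin P.r => [P.β i.castSucc, P.α i]).flatten) ++ [P.β (Fin.last P.r)]

/-- The underlying sequence `β₀, τ₁, β₁, …, β_r, τ_{r+1}` of a co-trajectory. -/
noncomputable def CoTrajU.seq {Δ : SComplex V} {Vf : Finset (Finset V × Finset V)} {q : ℕ}
    {s t : Finset V} (Q : CoTrajU Δ Vf q s t) : List (Finset V) :=
  (List.ofFn fun i : Fin (Q.r + 1) => [Q.β i, Q.γ i]).flatten

/-!
The Morse coefficients of a gradient vector field are the entries, at unmatched rows and columns, of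
the Schur complement of the incidence matrix with respect to its matched block: the path sums solve
the triangular system obtained by eliminating the matched simplices one step at a time. So they
depend only on which simplices are matched, not on how. Cancelling `(σ₀, τ₀)` enlarges the matched
block by the row of `τ₀` and the column of `σ₀`, and one further elimination step, with the pivot
`a₀₀ = ±1`, gives the formula. In terms of chains: if `g` and `g₀` are the invariant chains with
critical parts `σ_j` and `σ₀`, then `g - a₀₀ a_{j0} g₀` is the invariant chain of the new matching
with critical part `σ_j`. That the new matching is again acyclic, so that its path sums are finite
and are determined by it, follows from the uniqueness of the trajectory from `σ₀` to `τ₀`: a free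
edge shortcutting it would produce a second one.
-/

namespace MorseCancellation

theorem wellFounded_swap {α : Type*} [Finite α] {r : α → α → Prop} (h : WellFounded r) :
    WellFounded (Function.swap r) := by
  have : Std.Irrefl (Relation.TransGen (Function.swap r)) :=
    ⟨fun x hx => h.transGen.irrefl.irrefl x (Relation.transGen_swap.1 hx)⟩
  exact (Finite.wellFounded_of_trans_of_irrefl (Relation.TransGen (Function.swap r))).mono
    fun _ _ => Relation.TransGen.single

theorem sum_erase_image_univ_zero {α A : Type*} [DecidableEq α] [AddCommMonoid A] {n : ℕ}
    {f : Fin (n + 1) → α} (hf : Function.Injective f) (g : α → A) :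
    ∑ y ∈ (Finset.image f Finset.univ).erase (f 0), g y = ∑ j : Fin n, g (f j.succ) := by
  rw [← Finset.image_erase hf, Finset.sum_image hf.injOn, ← Finset.compl_singleton,
    ← Fin.image_succ_univ, Finset.sum_image (Fin.succ_injective n).injOn]

section AlternatingPaths

variable {X Y : Type*} {E M : X → Y → Prop} {x x₀ x' : X} {y y₀ z w : Y} {l l₁ l₂ : List (X × Y)}

/-- A free edge of the bipartite graph `E` with partial matching `M`: an edge outside `M`. -/
def FreeEdge (E M : X → Y → Prop) (x : X) (z : Y) : Prop :=
  E x z ∧ ¬ M x z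

/-- One step `x, z, x'` of an alternating path: up a free edge, then down a matched one. -/
def Step (E M : X → Y → Prop) (x' x : X) : Prop :=
  ∃ z, FreeEdge E M x z ∧ M x' z

/-- Alternating paths from `x` to `y` starting and ending with a free edge, encoded as the list of
their free edges; these are the gradient paths of discrete Morse theory. -/
inductive IsPath (E M : X → Y → Prop) : X → Y → List (X × Y) → Prop
  | single {x : X} {y : Y} : FreeEdge E M x y → IsPath E M x y [(x, y)]
  | cons {x x' : X} {y z : Y} {l : List (X × Y)} : FreeEdge E M x z → M x' z → IsPath E M x' y l →
      IsPath E M x y ((x, z) :: l)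

/-- `M` is an acyclic matching in the graph `E`: alternating paths cannot be continued forever. -/
structure IsAcyclicMatching (E M : X → Y → Prop) : Prop where
  le : M ≤ E
  biUnique : Relator.BiUnique M
  wellFounded : WellFounded (Step E M)

/-- `l` is the only alternating path from `x` to `y`. -/
def IsUniquePath (E M : X → Y → Prop) (x : X) (y : Y) (l : List (X × Y)) : Prop :=
  IsPath E M x y l ∧ ∀ l', IsPath E M x y l' → l' = l

/-- The matching obtained by exchanging free and matched edges along `l`: the matched edges of the
alternating path are those ending at the top of an edge of `l`. -/
def flipAlong (M : X → Y → Prop) (l : List (X × Y)) (x : X) (z : Y) : Prop :=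
  (x, z) ∈ l ∨ M x z ∧ z ∉ l.map Prod.snd

/-- `x` is reached from `x₀` by following an alternating path. -/
def Reaches (E M : X → Y → Prop) : X → X → Prop :=
  Relation.ReflTransGen (Function.swap (Step E M))

namespace IsPath

theorem exists_suffix (h : IsPath E M x y l) (hp : (x', z) ∈ l) :
    ∃ pre rest, l = pre ++ (x', z) :: rest ∧ IsPath E M x' y ((x', z) :: rest) := by
  induction h with
  | single hxy =>
    obtain ⟨rfl, rfl⟩ := Prod.mk.inj (List.mem_singleton.1 hp)
    exact ⟨[], [], rfl, .single hxy⟩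
  | cons hxz hM hl ih =>
    rcases List.mem_cons.1 hp with heq | hp
    · obtain ⟨rfl, rfl⟩ := Prod.mk.inj heq
      exact ⟨[], _, rfl, .cons hxz hM hl⟩
    · obtain ⟨pre, rest, rfl, hrest⟩ := ih hp
      exact ⟨_ :: pre, rest, rfl, hrest⟩

theorem freeEdge_of_mem (h : IsPath E M x y l) (hp : (x', z) ∈ l) : FreeEdge E M x' z := by
  obtain ⟨_, _, -, hrest⟩ := h.exists_suffix hp
  cases hrest <;> assumption

theorem reaches_of_mem (h : IsPath E M x y l) (hp : (x', z) ∈ l) : Reaches E M x x' := by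
  induction h with
  | single _ => exact (Prod.mk.inj (List.mem_singleton.1 hp)).1 ▸ .refl
  | cons hxz hM _ ih =>
    rcases List.mem_cons.1 hp with heq | hp
    · exact (Prod.mk.inj heq).1 ▸ .refl
    · exact .head ⟨_, hxz, hM⟩ (ih hp)

theorem replace_head (h : IsPath E M x' y ((x', z) :: l)) (hxz : FreeEdge E M x z) :
    IsPath E M x y ((x, z) :: l) := by
  cases h with
  | single _ => exact .single hxz
  | cons _ hM hl => exact .cons hxz hM hl

theorem ne_nil (h : IsPath E M x y l) : l ≠ [] := by
  cases h <;> simp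

theorem fst_mem (h : IsPath E M x y l) : x ∈ l.map Prod.fst := by
  cases h <;> simp

theorem snd_mem (h : IsPath E M x y l) : y ∈ l.map Prod.snd := by
  induction h with
  | single _ => simp
  | cons _ _ _ ih => exact List.mem_cons_of_mem _ ih

theorem eq_or_exists_matched_fst (h : IsPath E M x y l) (hp : (x', z) ∈ l) :
    x' = x ∨ ∃ w ∈ l.map Prod.snd, M x' w := by
  induction h with
  | single _ => exact .inl (Prod.mk.inj (List.mem_singleton.1 hp)).1
  | cons _ hM _ ih =>
    rcases List.mem_cons.1 hp with heq | hp
    · exact .inl (Prod.mk.inj heq).1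
    · rcases ih hp with rfl | ⟨w, hw, hMw⟩
      · exact .inr ⟨_, by simp, hM⟩
      · exact .inr ⟨w, List.mem_cons_of_mem _ hw, hMw⟩

theorem eq_or_exists_matched_snd (h : IsPath E M x y l) (hp : (x', z) ∈ l) :
    z = y ∨ ∃ w ∈ l.map Prod.fst, M w z := by
  induction h with
  | single _ => exact .inl (Prod.mk.inj (List.mem_singleton.1 hp)).2
  | cons _ hM hl ih =>
    rcases List.mem_cons.1 hp with heq | hp
    · exact .inr ⟨_, List.mem_cons_of_mem _ hl.fst_mem, (Prod.mk.inj heq).2 ▸ hM⟩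
    · exact (ih hp).imp_right fun ⟨w, hw, hMw⟩ => ⟨w, List.mem_cons_of_mem _ hw, hMw⟩

end IsPath

theorem isPath_singleton {p : X × Y} :
    IsPath E M x y [p] ↔ p.1 = x ∧ p.2 = y ∧ FreeEdge E M p.1 p.2 := by
  constructor
  · intro h
    cases h with
    | single hxy => exact ⟨rfl, rfl, hxy⟩
    | cons _ _ hl => exact absurd rfl hl.ne_nil
  · rintro ⟨rfl, rfl, hfree⟩
    exact .single hfree

theorem isPath_cons_cons {p q : X × Y} :
    IsPath E M x y (p :: q :: l) ↔
      p.1 = x ∧ FreeEdge E M p.1 p.2 ∧ M q.1 p.2 ∧ IsPath E M q.1 y (q :: l) := by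
  constructor
  · intro h
    cases h with
    | cons hxz hM hl =>
      cases hl with
      | single hq => exact ⟨rfl, hxz, hM, .single hq⟩
      | cons hq hM' hl => exact ⟨rfl, hxz, hM, .cons hq hM' hl⟩
  · rintro ⟨rfl, hfree, hM, hl⟩
    exact .cons hfree hM hl

theorem isPath_ofFn {r : ℕ} (f : Fin (r + 1) → X × Y) :
    IsPath E M x y (List.ofFn f) ↔ (f 0).1 = x ∧ (f (Fin.last r)).2 = y ∧
      (∀ i, FreeEdge E M (f i).1 (f i).2) ∧ ∀ i : Fin r, M (f i.succ).1 (f i.castSucc).2 := by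
  induction r generalizing x with
  | zero => simp [isPath_singleton]
  | succ r ih =>
    have ih := ih (x := (f 1).1) fun i => f i.succ
    have hfree := Fin.forall_fin_succ (P := fun i => FreeEdge E M (f i).1 (f i).2)
    have hmatch := Fin.forall_fin_succ
      (P := fun i : Fin (r + 1) => M (f i.succ).1 (f i.castSucc).2)
    rw [List.ofFn_succ] at ih
    rw [List.ofFn_succ, List.ofFn_succ, isPath_cons_cons, hfree, hmatch]
    simp only [Fin.succ_zero_eq_one, true_and, Fin.succ_last, Fin.castSucc_zero,
      Fin.succ_castSucc] at ih ⊢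
    rw [ih]
    tauto

theorem Reaches.exists_append (h : Reaches E M x x') :
    ∃ pre, ∀ y l, IsPath E M x' y l → IsPath E M x y (pre ++ l) := by
  induction h with
  | refl => exact ⟨[], fun _ _ hl => hl⟩
  | tail _ hstep ih =>
    obtain ⟨pre, hpre⟩ := ih
    obtain ⟨z, hz, hM⟩ := hstep
    exact ⟨pre ++ [(_, z)], fun y l hl => by simpa using hpre y _ (.cons hz hM hl)⟩

namespace IsUniquePath

theorem eq_of_reaches (hl : IsUniquePath E M x₀ y₀ l) (hx : Reaches E M x₀ x)
    (h₁ : IsPath E M x y₀ l₁) (h₂ : IsPath E M x y₀ l₂) : l₁ = l₂ := by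
  obtain ⟨pre, hpre⟩ := hx.exists_append
  exact List.append_cancel_left ((hl.2 _ (hpre _ _ h₁)).trans (hl.2 _ (hpre _ _ h₂)).symm)

theorem fst_eq_of_freeEdge (hl : IsUniquePath E M x₀ y₀ l) (hx : Reaches E M x₀ x)
    (hxz : FreeEdge E M x z) (hp : (x', z) ∈ l) : x = x' := by
  obtain ⟨pre, rest, hsplit, hrest⟩ := hl.1.exists_suffix hp
  obtain ⟨pre', hpre'⟩ := hx.exists_append
  have heq : pre' ++ (x, z) :: rest = pre ++ (x', z) :: rest :=
    (hl.2 _ (hpre' _ _ (hrest.replace_head hxz))).trans hsplit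
  simpa using List.append_inj_right' heq rfl

theorem snd_eq_of_mem (hl : IsUniquePath E M x₀ y₀ l) (hz : (x, z) ∈ l) (hw : (x, w) ∈ l) :
    z = w := by
  obtain ⟨_, _, -, h₁⟩ := hl.1.exists_suffix hz
  obtain ⟨_, _, -, h₂⟩ := hl.1.exists_suffix hw
  simpa using (List.cons.inj (hl.eq_of_reaches (hl.1.reaches_of_mem hz) h₁ h₂)).1

end IsUniquePath

theorem exists_flipAlong_fst (hl : IsPath E M x₀ y₀ l) (h : ∃ z, flipAlong M l x z) :
    x = x₀ ∨ ∃ z, M x z := by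
  obtain ⟨z, hz | hz⟩ := h
  · exact (hl.eq_or_exists_matched_fst hz).imp_right fun ⟨w, _, hw⟩ => ⟨w, hw⟩
  · exact .inr ⟨z, hz.1⟩

theorem exists_flipAlong_snd (hl : IsPath E M x₀ y₀ l) :
    (∃ x, flipAlong M l x z) ↔ z = y₀ ∨ ∃ x, M x z := by
  constructor
  · rintro ⟨x, hx | hx⟩
    · exact (hl.eq_or_exists_matched_snd hx).imp_right fun ⟨w, _, hw⟩ => ⟨w, hw⟩
    · exact .inr ⟨x, hx.1⟩
  · intro h
    by_cases hz : z ∈ l.map Prod.snd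
    · obtain ⟨⟨x, _⟩, hx, rfl⟩ := List.mem_map.1 hz
      exact ⟨x, .inl hx⟩
    · obtain ⟨x, hx⟩ := h.resolve_left fun h => hz (h ▸ hl.snd_mem)
      exact ⟨x, .inr ⟨hx, hz⟩⟩

theorem IsAcyclicMatching.snd_mem_of_matched (hM : IsAcyclicMatching E M) (hx₀ : ∀ z, ¬ M x₀ z)
    (hl : IsPath E M x₀ y₀ l) (hx : x ∈ l.map Prod.fst) (hz : M x z) : z ∈ l.map Prod.snd := by
  obtain ⟨p, hp, rfl⟩ := List.mem_map.1 hx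
  obtain hpx₀ | ⟨w, hw, hMw⟩ := hl.eq_or_exists_matched_fst hp
  · exact absurd (hpx₀ ▸ hz) (hx₀ z)
  · exact hM.biUnique.2 hz hMw ▸ hw

theorem IsAcyclicMatching.biUnique_flipAlong (hM : IsAcyclicMatching E M)
    (hx₀ : ∀ z, ¬ M x₀ z) (hl : IsUniquePath E M x₀ y₀ l) :
    Relator.BiUnique (flipAlong M l) := by
  have hmixed {x z w} (hz : (x, z) ∈ l) (hw : M x w) : w ∈ l.map Prod.snd :=
    hM.snd_mem_of_matched hx₀ hl.1 (List.mem_map_of_mem hz) hw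
  constructor
  · rintro x z x' (hx | hx) (hx' | hx')
    · exact hl.fst_eq_of_freeEdge (hl.1.reaches_of_mem hx) (hl.1.freeEdge_of_mem hx) hx'
    · exact absurd (List.mem_map_of_mem hx) hx'.2
    · exact absurd (List.mem_map_of_mem hx') hx.2
    · exact hM.biUnique.1 hx.1 hx'.1
  · rintro x z w (hz | hz) (hw | hw)
    · exact hl.snd_eq_of_mem hz hw
    · exact absurd (hmixed hz hw.1) hw.2
    · exact absurd (hmixed hw hz.1) hz.2
    · exact hM.biUnique.2 hz.1 hw.1

theorem Step.of_flipAlong (h : Step E (flipAlong M l) x' x) :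
    Step E M x' x ∧ x' ∉ l.map Prod.fst ∨ x' ∈ l.map Prod.fst := by
  by_cases hx' : x' ∈ l.map Prod.fst
  · exact .inr hx'
  · obtain ⟨z, ⟨hE, hfree⟩, hz | hz⟩ := h
    · exact absurd (List.mem_map_of_mem hz) hx'
    · exact .inl ⟨⟨z, ⟨hE, fun hMxz => hfree (.inr ⟨hMxz, hz.2⟩)⟩, hz.1⟩, hx'⟩

/- A free edge from a reached vertex to the top of an edge of `l` lies on `l`, by uniqueness of `l`;
so a step of the flipped matching which lands on `l` runs backwards along `l`. -/
theorem IsUniquePath.step_symm_of_flipAlong (hl : IsUniquePath E M x₀ y₀ l)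
    (hM : IsAcyclicMatching E M) (hx₀ : ∀ z, ¬ M x₀ z) (hy₀ : ∀ x, ¬ M x y₀)
    (hx : Reaches E M x₀ x) (h : Step E (flipAlong M l) x' x) (hx' : x' ∈ l.map Prod.fst) :
    x ∈ l.map Prod.fst ∧ Step E M x x' := by
  obtain ⟨z, ⟨hE, hfree⟩, hz | ⟨hz, hznot⟩⟩ := h
  · have hMxz : M x z := by
      by_contra hMxz
      exact hfree (.inl (hl.fst_eq_of_freeEdge hx ⟨hE, hMxz⟩ hz ▸ hz))
    obtain rfl | ⟨w, hw, hMw⟩ := hl.1.eq_or_exists_matched_snd hz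
    · exact absurd hMxz (hy₀ x)
    · exact ⟨hM.biUnique.1 hMw hMxz ▸ hw, z, hl.1.freeEdge_of_mem hz, hMxz⟩
  · exact absurd (hM.snd_mem_of_matched hx₀ hl.1 hx' hz) hznot

theorem IsAcyclicMatching.wellFounded_flipAlong [Finite X] (hM : IsAcyclicMatching E M)
    (hx₀ : ∀ z, ¬ M x₀ z) (hy₀ : ∀ x, ¬ M x y₀) (hl : IsUniquePath E M x₀ y₀ l) :
    WellFounded (Step E (flipAlong M l)) := by
  have reached_off (x) : Reaches E M x₀ x → x ∉ l.map Prod.fst →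
      Acc (Step E (flipAlong M l)) x := by
    induction x using hM.wellFounded.induction with
    | _ x ih =>
      refine fun hx hxl => ⟨x, fun x' hstep => ?_⟩
      obtain ⟨hstep', hx'l⟩ | hx'l := hstep.of_flipAlong
      · exact ih x' hstep' (hx.tail hstep') hx'l
      · exact absurd (hl.step_symm_of_flipAlong hM hx₀ hy₀ hx hstep hx'l).1 hxl
  have on_path (x) : x ∈ l.map Prod.fst → Acc (Step E (flipAlong M l)) x := by
    induction x using (wellFounded_swap hM.wellFounded).induction with
    | _ x ih =>
      refine fun hxl => ⟨x, fun x' hstep => ?_⟩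
      obtain ⟨p, hp, rfl⟩ := List.mem_map.1 hxl
      have hx := hl.1.reaches_of_mem hp
      obtain ⟨hstep', hx'l⟩ | hx'l := hstep.of_flipAlong
      · exact reached_off x' (hx.tail hstep') hx'l
      · exact ih x' (hl.step_symm_of_flipAlong hM hx₀ hy₀ hx hstep hx'l).2 hx'l
  refine ⟨fun x => ?_⟩
  induction x using hM.wellFounded.induction with
  | _ x ih =>
    refine ⟨x, fun x' hstep => ?_⟩
    obtain ⟨hstep', -⟩ | hx'l := hstep.of_flipAlong
    · exact ih x' hstep'
    · exact on_path x' hx'l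

theorem IsAcyclicMatching.flipAlong [Finite X] (hM : IsAcyclicMatching E M)
    (hx₀ : ∀ z, ¬ M x₀ z) (hy₀ : ∀ x, ¬ M x y₀) (hl : IsUniquePath E M x₀ y₀ l) :
    IsAcyclicMatching E (flipAlong M l) :=
  ⟨fun _ _ h => h.elim (fun hmem => (hl.1.freeEdge_of_mem hmem).1) fun hMxz => hM.le _ _ hMxz.1,
    hM.biUnique_flipAlong hx₀ hl, hM.wellFounded_flipAlong hx₀ hy₀ hl⟩

end AlternatingPaths

section PathSums

variable {X Y R : Type*} [CommRing R] {D : Matrix X Y R} {E M : X → Y → Prop} {x x₀ x' : X}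
  {y y₀ z : Y} {l : List (X × Y)}

theorem setOf_isPath_eq :
    {l | IsPath E M x y l} = {l | FreeEdge E M x y ∧ l = [(x, y)]} ∪
      ⋃ p ∈ {p : Y × X | FreeEdge E M x p.1 ∧ M p.2 p.1},
        List.cons (x, p.1) '' {l | IsPath E M p.2 y l} := by
  ext l
  simp only [Set.mem_union, Set.mem_iUnion, Set.mem_ofPred_eq, Set.mem_image]
  constructor
  · intro h
    cases h with
    | single hxy => exact .inl ⟨hxy, rfl⟩
    | cons hxz hM hl => exact .inr ⟨(_, _), ⟨hxz, hM⟩, _, hl, rfl⟩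
  · rintro (⟨hxy, rfl⟩ | ⟨p, ⟨hxz, hM⟩, l, hl, rfl⟩)
    · exact .single hxy
    · exact .cons hxz hM hl

theorem IsAcyclicMatching.finite_setOf_isPath [Finite X] [Finite Y]
    (hM : IsAcyclicMatching E M) : {l | IsPath E M x y l}.Finite := by
  induction x using hM.wellFounded.induction with
  | _ x ih =>
    rw [setOf_isPath_eq]
    refine ((Set.finite_singleton _).subset fun l hl => hl.2).union ?_
    exact (Set.toFinite _).biUnion fun p hp => (ih p.2 ⟨p.1, hp⟩).image _

theorem IsAcyclicMatching.finsum_isPath [Finite X] [Finite Y] {A : Type*} [AddCommMonoid A]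
    (hM : IsAcyclicMatching E M) (f : List (X × Y) → A) :
    ∑ᶠ l ∈ {l | IsPath E M x y l}, f l =
      ∑ᶠ l ∈ {l | FreeEdge E M x y ∧ l = [(x, y)]}, f l +
        ∑ᶠ p ∈ {p : Y × X | FreeEdge E M x p.1 ∧ M p.2 p.1},
          ∑ᶠ l ∈ {l | IsPath E M p.2 y l}, f ((x, p.1) :: l) := by
  have hfin (x) : {l | IsPath E M x y l}.Finite := hM.finite_setOf_isPath
  have hpaths := hfin x
  rw [setOf_isPath_eq] at hpaths ⊢
  rw [finsum_mem_union (Set.disjoint_left.2 ?single_ne_cons) (hpaths.subset Set.subset_union_left)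
    (hpaths.subset Set.subset_union_right), finsum_mem_biUnion ?disjoint_cons (Set.toFinite _)
    fun p _ => (hfin p.2).image _]
  · exact congr_arg _ (finsum_mem_congr rfl fun p _ =>
      finsum_mem_image List.cons_injective.injOn)
  case single_ne_cons =>
    rintro _ ⟨-, rfl⟩ hcons
    obtain ⟨p, -, l, hl, heq⟩ := Set.mem_iUnion₂.1 hcons
    exact hl.ne_nil (List.cons.inj heq).2
  case disjoint_cons =>
    rintro p hp q hq hpq
    refine Set.disjoint_left.2 ?_
    rintro _ ⟨l, hl, rfl⟩ ⟨l', -, heq⟩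
    obtain ⟨hpq₁, rfl⟩ := List.cons.inj heq
    refine hpq (Prod.ext (Prod.mk.inj hpq₁).2.symm ?_)
    exact hM.biUnique.1 hp.2 ((Prod.mk.inj hpq₁).2 ▸ hq.2)

/-- The graph on the rows and columns of a matrix whose edges are its nonzero entries. -/
def Adj (D : Matrix X Y R) (x : X) (z : Y) : Prop :=
  D x z ≠ 0

/-- The weight of an alternating path given by the list of its free edges; a matched edge enters
only through the ends of the two free edges it joins. -/
def pathWeight (D : Matrix X Y R) : List (X × Y) → R
  | [] => 1
  | [p] => D p.1 p.2
  | p :: q :: l => -(D p.1 p.2 * D q.1 p.2) * pathWeight D (q :: l)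

/-- The sums of the weights of all alternating paths, as a matrix; for a gradient vector field its
entries at critical simplices are the coefficients of the Morse coboundary operator. -/
noncomputable def pathSum (D : Matrix X Y R) (M : X → Y → Prop) : Matrix X Y R :=
  Matrix.of fun x y => ∑ᶠ l ∈ {l | IsPath (Adj D) M x y l}, pathWeight D l

/-- The block of `D` supported on the matched edges. -/
noncomputable def matchedPart (D : Matrix X Y R) (M : X → Y → Prop) : Matrix X Y R :=
  Matrix.of fun x z => if M x z then D x z else 0

theorem pathSum_def : pathSum D M x y = ∑ᶠ l ∈ {l | IsPath (Adj D) M x y l}, pathWeight D l :=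
  rfl

theorem pathWeight_cons (h : IsPath E M x' y l) :
    pathWeight D ((x, z) :: l) = -(D x z * D x' z) * pathWeight D l := by
  cases h <;> rfl

theorem pathWeight_ofFn {r : ℕ} (f : Fin (r + 1) → X × Y) :
    pathWeight D (List.ofFn f) =
      (∏ i : Fin r, -(D (f i.castSucc).1 (f i.castSucc).2 * D (f i.succ).1 (f i.castSucc).2)) *
        D (f (Fin.last r)).1 (f (Fin.last r)).2 := by
  induction r with
  | zero => simp [pathWeight]
  | succ r ih =>
    have ih := ih fun i => f i.succ
    rw [List.ofFn_succ] at ih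
    rw [List.ofFn_succ, List.ofFn_succ, pathWeight, ih, Fin.prod_univ_succ]
    simp [mul_assoc]

theorem IsPath.pathWeight_mul_self (h : IsPath (Adj D) M x y l) (hle : M ≤ Adj D)
    (hD : ∀ x z, D x z ≠ 0 → D x z * D x z = 1) : pathWeight D l * pathWeight D l = 1 := by
  induction h with
  | single hxy => exact hD _ _ hxy.1
  | cons hxz hM hl ih =>
    rw [pathWeight_cons hl, mul_mul_mul_comm, ih, neg_mul_neg, mul_mul_mul_comm, hD _ _ hxz.1,
      hD _ _ (hle _ _ hM), one_mul, one_mul]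

theorem IsUniquePath.pathSum_eq (h : IsUniquePath (Adj D) M x y l) :
    pathSum D M x y = pathWeight D l := by
  have hset : {l | IsPath (Adj D) M x y l} = {l} :=
    Set.ext fun l' => ⟨h.2 l', fun hl' => hl' ▸ h.1⟩
  rw [pathSum_def, hset, finsum_mem_singleton]

theorem freePart_eq_zero (h : ¬ FreeEdge (Adj D) M x z) : (D - matchedPart D M) x z = 0 := by
  by_cases hM : M x z
  · simp [matchedPart, hM]
  · simp [matchedPart, hM, not_not.1 fun hD => h ⟨hD, hM⟩]

theorem finsum_pathWeight_single :
    ∑ᶠ l ∈ {l | FreeEdge (Adj D) M x y ∧ l = [(x, y)]}, pathWeight D l =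
      (D - matchedPart D M) x y := by
  by_cases h : FreeEdge (Adj D) M x y
  · simp [h, matchedPart, h.2, pathWeight]
  · simp only [h, false_and, freePart_eq_zero h, Set.ofPred_false, finsum_mem_empty]

section

variable [Fintype Y]

theorem matchedPart_mul_transpose (hM : Relator.BiUnique M)
    (hD : ∀ x z, M x z → D x z * D x z = 1) (hx : M x z) :
    (matchedPart D M * (matchedPart D M).transpose) x x' = (1 : Matrix X X R) x x' := by
  rw [Matrix.mul_apply, Finset.sum_eq_single z]
  · by_cases hxx' : x = x'
    · subst hxx'
      simp [matchedPart, hx, hD]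
    · simp [matchedPart, hxx', show ¬ M x' z from fun h => hxx' (hM.1 hx h)]
  · intro w _ hw
    simp [matchedPart, show ¬ M x w from fun h => hw (hM.2 h hx)]
  · simp

/-- Forman's flow-invariant chain with critical part `y`: its only unmatched component is `y`, and
its image under `D` has no matched component. -/
structure IsInvariantChain (D : Matrix X Y R) (M : X → Y → Prop) (y : Y) (g : Y → R) : Prop where
  apply_eq : ∀ z, (∀ x, ¬ M x z) → g z = if z = y then 1 else 0
  mulVec_eq_zero : ∀ x, (∃ z, M x z) → D.mulVec g x = 0

theorem IsInvariantChain.unique (hM : IsAcyclicMatching (Adj D) M)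
    (hD : ∀ x z, D x z ≠ 0 → D x z * D x z = 1) {g g' : Y → R}
    (hg : IsInvariantChain D M y g) (hg' : IsInvariantChain D M y g') : g = g' := by
  have hunmatched (z) (hz : ∀ x, ¬ M x z) : (g - g') z = 0 := by
    rw [Pi.sub_apply, hg.apply_eq z hz, hg'.apply_eq z hz, sub_self]
  have hmatched (x) : ∀ z, M x z → (g - g') z = 0 := by
    induction x using hM.wellFounded.induction with
    | _ x ih =>
      intro z hz
      have hx : D.mulVec (g - g') x = 0 := by
        rw [Matrix.mulVec_sub, Pi.sub_apply, hg.mulVec_eq_zero x ⟨z, hz⟩,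
          hg'.mulVec_eq_zero x ⟨z, hz⟩, sub_zero]
      have hother (w) (hw : w ≠ z) : D x w * (g - g') w = 0 := by
        by_cases hxw : D x w = 0
        · rw [hxw, zero_mul]
        · by_cases hmatch : ∃ x', M x' w
          · obtain ⟨x', hx'⟩ := hmatch
            have hstep : Step (Adj D) M x' x := ⟨w, ⟨hxw, fun h => hw (hM.biUnique.2 h hz)⟩, hx'⟩
            rw [ih x' hstep w hx', mul_zero]
          · rw [hunmatched w (not_exists.1 hmatch), mul_zero]
      rw [Matrix.mulVec, dotProduct, Finset.sum_eq_single z (fun w _ => hother w) (by simp)] at hx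
      rw [← one_mul ((g - g') z), ← hD x z (hM.le _ _ hz), mul_assoc, hx, mul_zero]
  refine sub_eq_zero.1 (funext fun z => ?_)
  by_cases hz : ∃ x, M x z
  · exact hmatched _ z hz.choose_spec
  · exact hunmatched z (not_exists.1 hz)

theorem IsAcyclicMatching.pathSum_apply [Fintype X] (hM : IsAcyclicMatching (Adj D) M) :
    pathSum D M x y = (D - matchedPart D M) x y -
      ∑ p : Y × X, (D - matchedPart D M) x p.1 * (matchedPart D M p.2 p.1 * pathSum D M p.2 y) := by
  rw [pathSum_def, hM.finsum_isPath, finsum_pathWeight_single, sub_eq_add_neg (_ : R),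
    ← Finset.sum_neg_distrib, finsum_mem_def, finsum_eq_sum_of_fintype]
  congr 1
  refine Finset.sum_congr rfl fun p _ => ?_
  rw [Set.indicator_apply]
  split_ifs with hp
  · have hcons := finsum_mem_congr (s := {l | IsPath (Adj D) M p.2 y l}) rfl fun l hl =>
      pathWeight_cons (D := D) (x := x) (z := p.1) hl
    rw [hcons, ← mul_finsum_mem' _ _ hM.finite_setOf_isPath]
    simp [matchedPart, hp.2, hp.1.2, pathSum_def, mul_assoc]
  · by_cases hxp : FreeEdge (Adj D) M x p.1
    · simp [matchedPart, show ¬ M p.2 p.1 from fun h => hp ⟨hxp, h⟩]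
    · rw [freePart_eq_zero hxp, zero_mul, neg_zero]

theorem IsAcyclicMatching.pathSum_eq [Fintype X] (hM : IsAcyclicMatching (Adj D) M) :
    pathSum D M = (D - matchedPart D M) -
      (D - matchedPart D M) * ((matchedPart D M).transpose * pathSum D M) := by
  ext x y
  rw [hM.pathSum_apply]
  simp only [Matrix.sub_apply, Matrix.mul_apply, Matrix.transpose_apply, Finset.mul_sum,
    Fintype.sum_prod_type]

theorem IsAcyclicMatching.mul_one_sub_eq [Fintype X] (hM : IsAcyclicMatching (Adj D) M) :
    D * (1 - (matchedPart D M).transpose * pathSum D M) = matchedPart D M +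
      (1 - matchedPart D M * (matchedPart D M).transpose) * pathSum D M := by
  set B := matchedPart D M
  set T := B.transpose * pathSum D M
  calc D * (1 - T) = B + (((D - B) - (D - B) * T) - B * T) := by
        simp only [Matrix.mul_sub, Matrix.sub_mul, Matrix.mul_one]
        abel
    _ = B + (pathSum D M - B * T) := by rw [← hM.pathSum_eq]
    _ = B + (1 - B * B.transpose) * pathSum D M := by
        rw [Matrix.sub_mul, Matrix.one_mul, Matrix.mul_assoc]

theorem IsAcyclicMatching.exists_isInvariantChain [Finite X]
    (hM : IsAcyclicMatching (Adj D) M) (hD : ∀ x z, D x z ≠ 0 → D x z * D x z = 1)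
    (hy : ∀ x, ¬ M x y) :
    ∃ g, IsInvariantChain D M y g ∧ ∀ x, (∀ z, ¬ M x z) → D.mulVec g x = pathSum D M x y := by
  have := Fintype.ofFinite X
  set B := matchedPart D M with hB
  have hDG (x) : D.mulVec (fun z => (1 - B.transpose * pathSum D M : Matrix Y Y R) z y) x =
      (B + (1 - B * B.transpose) * pathSum D M : Matrix X Y R) x y :=
    congr_fun₂ hM.mul_one_sub_eq x y
  refine ⟨fun z => (1 - B.transpose * pathSum D M : Matrix Y Y R) z y, ⟨fun z hz => ?_, ?_⟩, ?_⟩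
  · simp [hB, matchedPart, Matrix.mul_apply, hz, Matrix.one_apply]
  · rintro x ⟨z, hz⟩
    have hrow (x') : (1 - B * B.transpose : Matrix X X R) x x' = 0 := by
      rw [Matrix.sub_apply, matchedPart_mul_transpose hM.biUnique
        (fun x z h => hD x z (hM.le x z h)) hz, sub_self]
    rw [hDG, Matrix.add_apply, Matrix.mul_apply, Finset.sum_eq_zero fun x' _ => by
      rw [hrow, zero_mul]]
    simp [hB, matchedPart, hy]
  · intro x hx
    rw [hDG, Matrix.sub_mul, Matrix.one_mul, Matrix.mul_assoc]
    simp [hB, matchedPart, Matrix.mul_apply, hx]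

theorem IsInvariantChain.mulVec_eq_pathSum [Finite X] (hM : IsAcyclicMatching (Adj D) M)
    (hD : ∀ x z, D x z ≠ 0 → D x z * D x z = 1) {g : Y → R} (hg : IsInvariantChain D M y g)
    (hx : ∀ z, ¬ M x z) (hy : ∀ x, ¬ M x y) : D.mulVec g x = pathSum D M x y := by
  obtain ⟨g', hg', hpath⟩ := hM.exists_isInvariantChain hD hy
  rw [hg.unique hM hD hg', hpath x hx]

end

theorem pathSum_flipAlong [Finite X] [Finite Y] (hM : IsAcyclicMatching (Adj D) M)
    (hD : ∀ x z, D x z ≠ 0 → D x z * D x z = 1)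
    (hx₀ : ∀ z, ¬ M x₀ z) (hy₀ : ∀ x, ¬ M x y₀) (hl : IsUniquePath (Adj D) M x₀ y₀ l)
    (hx : ∀ z, ¬ M x z) (hxx₀ : x ≠ x₀) (hy : ∀ x, ¬ M x y) (hyy₀ : y ≠ y₀) :
    pathSum D (flipAlong M l) x y =
      pathSum D M x y - pathSum D M x₀ y₀ * pathSum D M x y₀ * pathSum D M x₀ y := by
  have := Fintype.ofFinite Y
  obtain ⟨g, hg, hDg⟩ := hM.exists_isInvariantChain hD hy
  obtain ⟨g₀, hg₀, hDg₀⟩ := hM.exists_isInvariantChain hD hy₀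
  have hunit : pathSum D M x₀ y₀ * pathSum D M x₀ y₀ = 1 := by
    rw [hl.pathSum_eq, hl.1.pathWeight_mul_self hM.le hD]
  set c := pathSum D M x₀ y₀ * pathSum D M x₀ y with hc
  have hmulVec (u) : D.mulVec (g - c • g₀) u = D.mulVec g u - c * D.mulVec g₀ u := by
    rw [Matrix.mulVec_sub, Matrix.mulVec_smul, Pi.sub_apply, Pi.smul_apply, smul_eq_mul]
  have hchain : IsInvariantChain D (flipAlong M l) y (g - c • g₀) := by
    constructor
    · intro z hz
      obtain ⟨hzy₀, hzM⟩ := not_or.1 (mt (exists_flipAlong_snd hl.1).2 (not_exists.2 hz))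
      have hzM := not_exists.1 hzM
      simp [hg.apply_eq z hzM, hg₀.apply_eq z hzM, hzy₀]
    · intro u hu
      rw [hmulVec]
      obtain rfl | hu := exists_flipAlong_fst hl.1 hu
      · rw [hDg u hx₀, hDg₀ u hx₀]
        linear_combination (-pathSum D M u y) * hunit
      · rw [hg.mulVec_eq_zero u hu, hg₀.mulVec_eq_zero u hu, mul_zero, sub_zero]
  have hxW : ∀ z, ¬ flipAlong M l x z :=
    not_exists.1 fun h => (exists_flipAlong_fst hl.1 h).elim hxx₀ (not_exists.2 hx)
  have hyW : ∀ x, ¬ flipAlong M l x y :=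
    not_exists.1 fun h => ((exists_flipAlong_snd hl.1).1 h).elim hyy₀ (not_exists.2 hy)
  rw [← hchain.mulVec_eq_pathSum (hM.flipAlong hx₀ hy₀ hl) hD hxW hyW, hmulVec, hDg x hx,
    hDg₀ x hx, hc, mul_right_comm]

end PathSums

section Complexes

variable {Δ : SComplex V} {Vf : Finset (Finset V × Finset V)} {k : ℕ}

/-- The simplices of cardinality `c`, that is, of dimension `c - 1`. -/
abbrev Face (Δ : SComplex V) (c : ℕ) : Type _ :=
  {s // s ∈ Δ.faces.filter (·.card = c)}

/-- A simplex of cardinality `c`, as an element of `Face Δ c`. -/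
def toFace {c : ℕ} {s : Finset V} (hs : s ∈ Δ.faces) (hc : s.card = c) : Face Δ c :=
  ⟨s, Finset.mem_filter.2 ⟨hs, hc⟩⟩

/-- The matrix of the simplicial coboundary on simplices of cardinality `k`; unlike in
`incidence`, the smaller simplex comes first. -/
noncomputable def incidenceMatrix (Δ : SComplex V) (k : ℕ) :
    Matrix (Face Δ k) (Face Δ (k + 1)) ℤ :=
  Matrix.of fun x z => incidence z.1 x.1

/-- The pairs of a vector field between the simplices of cardinality `k` and `k + 1`, as a matching
between the rows and the columns of `incidenceMatrix`. -/
def levelMatching (Δ : SComplex V) (Vf : Finset (Finset V × Finset V)) (k : ℕ) (x : Face Δ k)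
    (z : Face Δ (k + 1)) : Prop :=
  (x.1, z.1) ∈ Vf

theorem incidence_ne_zero_iff {s t : Finset V} : incidence t s ≠ 0 ↔ s ⊆ t ∧ (t \ s).card = 1 := by
  simp [incidence]

theorem incidence_mul_self {s t : Finset V} (h : incidence t s ≠ 0) :
    incidence t s * incidence t s = 1 := by
  rw [incidence, if_pos (incidence_ne_zero_iff.1 h), ← mul_pow, neg_mul_neg, one_mul, one_pow]

theorem adj_incidenceMatrix_iff {x : Face Δ k} {z : Face Δ (k + 1)} :
    Adj (incidenceMatrix Δ k) x z ↔ x.1 ⊂ z.1 := by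
  have hx := (Finset.mem_filter.1 x.2).2
  have hz := (Finset.mem_filter.1 z.2).2
  refine incidence_ne_zero_iff.trans ⟨fun h => h.1.ssubset_of_ne fun heq => ?_, fun h => ⟨h.1, ?_⟩⟩
  · simp [heq] at h
  · rw [Finset.card_sdiff_of_subset h.1, hx, hz, Nat.add_sub_cancel_left]

theorem biUnique_levelMatching (hV : IsDVF Δ Vf) : Relator.BiUnique (levelMatching Δ Vf k) := by
  constructor
  · intro x z x' hx hx'
    by_contra hne
    exact (hV.2 _ hx _ hx' fun h => hne (Subtype.ext (Prod.mk.inj h).1)).2.2.2 rfl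
  · intro x z w hz hw
    by_contra hne
    exact (hV.2 _ hz _ hw fun h => hne (Subtype.ext (Prod.mk.inj h).2)).1 rfl

theorem injective_of_isGVF (hV : IsGVF Δ Vf) {f : ℕ → Face Δ k} {g : ℕ → Face Δ (k + 1)}
    (hfree : ∀ n, FreeEdge (Adj (incidenceMatrix Δ k)) (levelMatching Δ Vf k) (f (n + 1)) (g n))
    (hmatch : ∀ n, levelMatching Δ Vf k (f n) (g n)) : Function.Injective f := by
  intro i j hij
  by_contra hne
  wlog hlt : i < j generalizing i j
  · exact this hij.symm (Ne.symm hne) (lt_of_le_of_ne (not_lt.1 hlt) (Ne.symm hne))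
  have hclosed : g j = g i := (biUnique_levelMatching hV.1).2 (hmatch j) (hij ▸ hmatch i)
  let P : Traj Δ Vf k (g i).1 (g i).1 :=
    { r := j - i
      β := fun t => (g (i + t)).1
      α := fun t => (f (i + t + 1)).1
      βmem := fun t => (Finset.mem_filter.1 (g (i + t)).2).1
      αmem := fun t => (Finset.mem_filter.1 (f (i + t + 1)).2).1
      βcard := fun t => (Finset.mem_filter.1 (g (i + t)).2).2
      αcard := fun t => (Finset.mem_filter.1 (f (i + t + 1)).2).2
      first := rfl
      last := by rw [Fin.val_last, Nat.add_sub_of_le hlt.le, hclosed]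
      sub := fun t => adj_incidenceMatrix_iff.1 (hfree (i + t)).1
      vpair := fun t => hmatch (i + t + 1)
      αne := fun t _ heq => (hfree (i + t + 1)).2 (Subtype.ext heq ▸ hmatch (i + t + 1))
      βne := fun t heq => (hfree (i + t)).2 (Subtype.ext heq ▸ hmatch (i + t + 1)) }
  exact hV.2 ⟨k, _, P, Nat.sub_pos_of_lt hlt⟩

theorem isAcyclicMatching_levelMatching (hV : IsGVF Δ Vf) :
    IsAcyclicMatching (Adj (incidenceMatrix Δ k)) (levelMatching Δ Vf k) where
  le x z hxz := adj_incidenceMatrix_iff.2 (hV.1.1 _ hxz).2.2.1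
  biUnique := biUnique_levelMatching hV.1
  wellFounded := by
    refine wellFounded_swap (wellFounded_iff_isEmpty_descending_chain.2 ⟨fun ⟨f, hf⟩ => ?_⟩)
    choose g hg using hf
    exact not_injective_infinite_finite f
      (injective_of_isGVF hV (fun n => (hg n).1) fun n => (hg n).2)

/-- The free edges of a co-trajectory, listed from its start to its end. -/
def edgeList {s t : Finset V} (Q : CoTrajU Δ Vf k s t) : List (Face Δ k × Face Δ (k + 1)) :=
  List.ofFn fun i => (toFace (Q.βmem i) (Q.βcard i), toFace (Q.γmem i) (Q.γcard i))

theorem edgeList_injective {s t : Finset V} :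
    Function.Injective (edgeList : CoTrajU Δ Vf k s t → _) := by
  rintro ⟨r, β, γ, _, _, _, _, _, _, _, _, _, _⟩ ⟨r', β', γ', _, _, _, _, _, _, _, _, _, _⟩ h
  obtain rfl : r = r' := by simpa [edgeList] using congrArg List.length h
  have hfun := List.ofFn_injective h
  obtain rfl : β = β' := funext fun i => congr_arg (fun p => p.1.1) (congr_fun hfun i)
  obtain rfl : γ = γ' := funext fun i => congr_arg (fun p => p.2.1) (congr_fun hfun i)
  rfl

theorem pathWeight_edgeList {s t : Finset V} (Q : CoTrajU Δ Vf k s t) :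
    pathWeight (incidenceMatrix Δ k) (edgeList Q) = wCTU Q :=
  pathWeight_ofFn _

theorem isPath_edgeList (hM : Relator.LeftUnique (levelMatching Δ Vf k)) {x : Face Δ k}
    {y : Face Δ (k + 1)} (hy : ∀ u, ¬ levelMatching Δ Vf k u y) (Q : CoTrajU Δ Vf k x.1 y.1) :
    IsPath (Adj (incidenceMatrix Δ k)) (levelMatching Δ Vf k) x y (edgeList Q) := by
  have hlast : toFace (Q.γmem (Fin.last Q.r)) (Q.γcard _) = y := Subtype.ext Q.last
  refine (isPath_ofFn _).2 ⟨Subtype.ext Q.first, hlast,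
    fun i => ⟨adj_incidenceMatrix_iff.2 (Q.sub i), ?_⟩, Q.vpair⟩
  induction i using Fin.lastCases with
  | last => simpa only [hlast] using hy _
  | cast i =>
    intro h
    have heq := hM h (b := toFace (Q.βmem i.succ) (Q.βcard _)) (Q.vpair i)
    exact Q.βne i (congr_arg Subtype.val heq)

theorem exists_edgeList_eq {x : Face Δ k} {y : Face Δ (k + 1)}
    {l : List (Face Δ k × Face Δ (k + 1))}
    (h : IsPath (Adj (incidenceMatrix Δ k)) (levelMatching Δ Vf k) x y l) :
    ∃ Q : CoTrajU Δ Vf k x.1 y.1, edgeList Q = l := by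
  obtain ⟨r, f, rfl⟩ : ∃ (r : ℕ) (f : Fin (r + 1) → Face Δ k × Face Δ (k + 1)),
      List.ofFn f = l := by
    obtain ⟨a, l, rfl⟩ := List.exists_cons_of_ne_nil h.ne_nil
    exact ⟨l.length, (a :: l).get, List.ofFn_get _⟩
  obtain ⟨hfirst, hlast, hfree, hmatch⟩ := (isPath_ofFn f).1 h
  exact
    ⟨{  r := r
        β := fun i => (f i).1.1
        γ := fun i => (f i).2.1
        βmem := fun i => (Finset.mem_filter.1 (f i).1.2).1
        γmem := fun i => (Finset.mem_filter.1 (f i).2.2).1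
        βcard := fun i => (Finset.mem_filter.1 (f i).1.2).2
        γcard := fun i => (Finset.mem_filter.1 (f i).2.2).2
        first := congr_arg Subtype.val hfirst
        last := congr_arg Subtype.val hlast
        sub := fun i => adj_incidenceMatrix_iff.1 (hfree i).1
        vpair := hmatch
        βne := fun i heq => (hfree i.castSucc).2 (Subtype.ext heq ▸ hmatch i)
        γne := fun i heq => (hfree i.succ).2 (Subtype.ext heq ▸ hmatch i) }, rfl⟩

theorem cbCoeff_eq_pathSum (hM : Relator.LeftUnique (levelMatching Δ Vf k)) {x : Face Δ k}
    {y : Face Δ (k + 1)} (hy : ∀ u, ¬ levelMatching Δ Vf k u y) :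
    cbCoeff Δ Vf k x.1 y.1 = pathSum (incidenceMatrix Δ k) (levelMatching Δ Vf k) x y := by
  have hrange : Set.range (edgeList : CoTrajU Δ Vf k x.1 y.1 → _) =
      {l | IsPath (Adj (incidenceMatrix Δ k)) (levelMatching Δ Vf k) x y l} :=
    Set.Subset.antisymm (Set.range_subset_iff.2 (isPath_edgeList hM hy)) fun _ => exists_edgeList_eq
  rw [pathSum_def, ← hrange, finsum_mem_range edgeList_injective]
  exact finsum_congr fun Q => (pathWeight_edgeList Q).symm

/-- A co-trajectory, read backwards as a trajectory. -/
def reverseCoTraj {s t : Finset V} (Q : CoTrajU Δ Vf k s t) : TrajD Δ Vf k t s where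
  r := Q.r
  β i := Q.γ i.rev
  α i := Q.β i.rev
  βmem i := Q.γmem _
  αmem i := Q.βmem _
  βcard i := Q.γcard _
  αcard i := Q.βcard _
  first := by rw [Fin.rev_zero, Q.last]
  last := by rw [Fin.rev_last, Q.first]
  sub i := Q.sub _
  vpair i := by rw [Fin.rev_castSucc, Fin.rev_succ]; exact Q.vpair _
  αne i := by rw [Fin.rev_castSucc, Fin.rev_succ]; exact Q.βne _
  βne i := by rw [Fin.rev_castSucc, Fin.rev_succ]; exact (Q.γne _).symm

/-- A trajectory, read backwards as a co-trajectory. -/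
def reverseTraj {s t : Finset V} (P : TrajD Δ Vf k s t) : CoTrajU Δ Vf k t s where
  r := P.r
  β i := P.α i.rev
  γ i := P.β i.rev
  βmem i := P.αmem _
  γmem i := P.βmem _
  βcard i := P.αcard _
  γcard i := P.βcard _
  first := by rw [Fin.rev_zero, P.last]
  last := by rw [Fin.rev_last, P.first]
  sub i := P.sub _
  vpair i := by rw [Fin.rev_castSucc, Fin.rev_succ]; exact P.vpair _
  βne i := by rw [Fin.rev_castSucc, Fin.rev_succ]; exact P.αne _
  γne i := by rw [Fin.rev_castSucc, Fin.rev_succ]; exact (P.βne _).symm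

theorem reverseTraj_reverseCoTraj {s t : Finset V} (Q : CoTrajU Δ Vf k s t) :
    reverseTraj (reverseCoTraj Q) = Q := by
  obtain ⟨r, β, γ, _, _, _, _, _, _, _, _, _, _⟩ := Q
  simp [reverseTraj, reverseCoTraj]

theorem isUniquePath_edgeList (hM : Relator.LeftUnique (levelMatching Δ Vf k)) {x : Face Δ k}
    {y : Face Δ (k + 1)} (hy : ∀ u, ¬ levelMatching Δ Vf k u y) {P : TrajD Δ Vf k y.1 x.1}
    (hP : ∀ Q, Q = P) :
    IsUniquePath (Adj (incidenceMatrix Δ k)) (levelMatching Δ Vf k) x y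
      (edgeList (reverseTraj P)) := by
  refine ⟨isPath_edgeList hM hy _, fun l hl => ?_⟩
  obtain ⟨Q, rfl⟩ := exists_edgeList_eq hl
  rw [← hP (reverseCoTraj Q), reverseTraj_reverseCoTraj]

theorem mem_edgeList_reverseTraj {s t : Finset V} {P : TrajD Δ Vf k s t} {x : Face Δ k}
    {z : Face Δ (k + 1)} :
    (x, z) ∈ edgeList (reverseTraj P) ↔ ∃ i, (P.α i, P.β i) = (x.1, z.1) := by
  rw [edgeList, List.mem_ofFn, Fin.rev_surjective.exists]
  simp only [reverseTraj, toFace, Fin.rev_rev, Prod.mk.injEq, Subtype.ext_iff]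

theorem mem_cancelPair {s t : Finset V} {P : TrajD Δ Vf k s t} {p : Finset V × Finset V} :
    p ∈ cancelPair P ↔ (p ∈ Vf ∧ ∀ i : Fin P.r, (P.α i.castSucc, P.β i.succ) ≠ p) ∨
      ∃ i, (P.α i, P.β i) = p := by
  simp [cancelPair]

theorem levelMatching_cancelPair (hM : Relator.LeftUnique (levelMatching Δ Vf k))
    {y : Face Δ (k + 1)} (hy : ∀ u, ¬ levelMatching Δ Vf k u y) {t : Finset V}
    (P : TrajD Δ Vf k y.1 t) :
    levelMatching Δ (cancelPair P) k =
      flipAlong (levelMatching Δ Vf k) (edgeList (reverseTraj P)) := by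
  ext x z
  rw [levelMatching, mem_cancelPair, flipAlong, mem_edgeList_reverseTraj, or_comm]
  refine or_congr_right (and_congr_right fun hxz => ?_)
  rw [← not_exists, not_iff_not]
  constructor
  · rintro ⟨i, hi⟩
    exact List.mem_map.2 ⟨(toFace (P.αmem i.succ) (P.αcard _), z),
      mem_edgeList_reverseTraj.2 ⟨i.succ, Prod.ext rfl (Prod.mk.inj hi).2⟩, rfl⟩
  · rintro hz
    obtain ⟨p, hp, rfl⟩ := List.mem_map.1 hz
    obtain ⟨i, hi⟩ := mem_edgeList_reverseTraj.1 hp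
    have hi := (Prod.mk.inj hi).2
    induction i using Fin.cases with
    | zero => exact absurd (Subtype.ext (hi.symm.trans P.first) ▸ hxz) (hy x)
    | succ i =>
      have hmatch : levelMatching Δ Vf k (toFace (P.αmem i.castSucc) (P.αcard _)) p.2 := by
        rw [levelMatching, ← hi]
        exact P.vpair i
      exact ⟨i, Prod.ext (congr_arg Subtype.val (hM hmatch hxz)) hi⟩

theorem critC_subset {c : ℕ} : critC Δ Vf c ⊆ Δ.faces.filter (·.card = c) :=
  Finset.monotone_filter_right _ fun _ _ h => h.1

theorem not_levelMatching_of_mem_critC (hV : IsDVF Δ Vf) {x : Face Δ k}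
    (hx : x.1 ∈ critC Δ Vf k) (z : Face Δ (k + 1)) : ¬ levelMatching Δ Vf k x z := by
  intro hxz
  obtain ⟨-, -, -, hne, h | ⟨-, h⟩⟩ := Finset.mem_filter.1 hx
  · exact (h _ hxz).1 rfl
  · exact (hV.2 _ hxz _ h fun heq => hne.ne_empty (Prod.mk.inj heq).1).2.1 rfl

theorem mem_critC_succ_iff (hk : 1 ≤ k) {s : Finset V} :
    s ∈ critC Δ Vf (k + 1) ↔
      s ∈ Δ.faces ∧ s.card = k + 1 ∧ ∀ p ∈ Vf, s ≠ p.1 ∧ s ≠ p.2 := by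
  rw [critC, Finset.mem_filter, IsCrit]
  constructor
  · rintro ⟨hs, hcard, -, -, h | ⟨hone, -⟩⟩
    · exact ⟨hs, hcard, h⟩
    · omega
  · rintro ⟨hs, hcard, h⟩
    exact ⟨hs, hcard, hs, Finset.card_pos.1 (by omega), .inl h⟩

theorem critC_cancelPair_succ (hk : 1 ≤ k) {s t : Finset V} (P : TrajD Δ Vf k s t) :
    critC Δ (cancelPair P) (k + 1) = (critC Δ Vf (k + 1)).erase s := by
  ext y
  rw [Finset.mem_erase, mem_critC_succ_iff hk, mem_critC_succ_iff hk]
  simp only [mem_cancelPair]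
  have hα (hcard : y.card = k + 1) (i) : y ≠ P.α i :=
    ne_of_apply_ne Finset.card (by rw [hcard, P.αcard]; exact k.succ_ne_self)
  constructor
  · rintro ⟨hy, hcard, h⟩
    have hβ (i) : y ≠ P.β i := (h _ (.inr ⟨i, rfl⟩)).2
    refine ⟨P.first ▸ hβ 0, hy, hcard, fun p hp => ?_⟩
    by_cases hpP : ∃ i : Fin P.r, (P.α i.castSucc, P.β i.succ) = p
    · obtain ⟨i, rfl⟩ := hpP
      exact ⟨hα hcard _, hβ _⟩
    · exact h p (.inl ⟨hp, not_exists.1 hpP⟩)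
  · rintro ⟨hys, hy, hcard, h⟩
    refine ⟨hy, hcard, ?_⟩
    rintro p (⟨hp, -⟩ | ⟨i, rfl⟩)
    · exact h p hp
    · refine ⟨hα hcard i, ?_⟩
      induction i using Fin.cases with
      | zero => exact P.first.symm ▸ hys
      | succ i => exact (h _ (P.vpair i)).2

theorem not_levelMatching_of_mem_critC_succ (hk : 1 ≤ k) {y : Face Δ (k + 1)}
    (hy : y.1 ∈ critC Δ Vf (k + 1)) (x : Face Δ k) : ¬ levelMatching Δ Vf k x y :=
  fun hxy => (((mem_critC_succ_iff hk).1 hy).2.2 _ hxy).2 rfl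

theorem mem_critC_cancelPair {s t x : Finset V} (P : TrajD Δ Vf k s t) (hx : x ∈ critC Δ Vf k)
    (hxt : x ≠ t) : x ∈ critC Δ (cancelPair P) k := by
  obtain ⟨hxf, hcard, -, hne, h⟩ := Finset.mem_filter.1 hx
  have hβ (i) : x ≠ P.β i :=
    ne_of_apply_ne Finset.card (by rw [hcard, P.βcard]; exact k.succ_ne_self.symm)
  refine Finset.mem_filter.2 ⟨hxf, hcard, hxf, hne, h.imp (fun h p hp => ?_) fun h => ⟨h.1, ?_⟩⟩
  · obtain ⟨hp, -⟩ | ⟨i, rfl⟩ := mem_cancelPair.1 hp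
    · exact h p hp
    · refine ⟨?_, hβ i⟩
      induction i using Fin.lastCases with
      | last => exact P.last.symm ▸ hxt
      | cast i => exact (h _ (P.vpair i)).1
  · exact mem_cancelPair.2 (.inl ⟨h.2, fun i heq => hβ _ (Prod.mk.inj heq).2.symm⟩)

theorem cbCoeff_cancelPair (hk : 1 ≤ k) (hV : IsGVF Δ Vf) {s t x y : Finset V}
    (hs : s ∈ critC Δ Vf (k + 1)) (ht : t ∈ critC Δ Vf k) {P : TrajD Δ Vf k s t}
    (hP : ∀ Q, Q = P) (hx : x ∈ critC Δ Vf k) (hxt : x ≠ t) (hy : y ∈ critC Δ Vf (k + 1))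
    (hys : y ≠ s) :
    cbCoeff Δ (cancelPair P) k x y = cbCoeff Δ Vf k x y -
      cbCoeff Δ Vf k t s * cbCoeff Δ Vf k x s * cbCoeff Δ Vf k t y := by
  lift s to Face Δ (k + 1) using critC_subset hs
  lift t to Face Δ k using critC_subset ht
  lift x to Face Δ k using critC_subset hx
  lift y to Face Δ (k + 1) using critC_subset hy
  have hM := isAcyclicMatching_levelMatching (k := k) hV
  have hl := isUniquePath_edgeList hM.biUnique.1 (not_levelMatching_of_mem_critC_succ hk hs) hP
  have hxV := not_levelMatching_of_mem_critC hV.1 hx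
  have htV := not_levelMatching_of_mem_critC hV.1 ht
  have hyV := not_levelMatching_of_mem_critC_succ hk hy
  have hsV := not_levelMatching_of_mem_critC_succ hk hs
  have hW := levelMatching_cancelPair hM.biUnique.1 hsV P
  have hMW := (hM.flipAlong htV hsV hl).biUnique.1
  have hyW := not_levelMatching_of_mem_critC_succ hk
    ((critC_cancelPair_succ hk P).symm ▸ Finset.mem_erase.2 ⟨hys, hy⟩)
  rw [cbCoeff_eq_pathSum (hW ▸ hMW) hyW, cbCoeff_eq_pathSum hM.biUnique.1 hyV,
    cbCoeff_eq_pathSum hM.biUnique.1 hsV, cbCoeff_eq_pathSum hM.biUnique.1 hsV,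
    cbCoeff_eq_pathSum hM.biUnique.1 hyV, hW]
  exact pathSum_flipAlong hM (fun _ _ => incidence_mul_self) htV hsV hl hxV
    (Subtype.coe_ne_coe.1 hxt) hyV (Subtype.coe_ne_coe.1 hys)

theorem morseCoboundary_single {x : Finset V} (hx : x ∈ critC Δ Vf k) :
    morseCoboundary Δ Vf k (Finsupp.single x 1) =
      ∑ y ∈ critC Δ Vf (k + 1), cbCoeff Δ Vf k x y • Finsupp.single y (1 : ℤ) := by
  simp [morseCoboundary, hx]

theorem cbCoeff_eq_of_morseCoboundary_single {ι : Type*} [Fintype ι] {σ : ι → Finset V}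
    (hσ : Function.Injective σ) (hcrit : critC Δ Vf (k + 1) = Finset.image σ Finset.univ)
    {x : Finset V} (hx : x ∈ critC Δ Vf k) {a : ι → ℤ}
    (ha : morseCoboundary Δ Vf k (Finsupp.single x 1) =
      ∑ j, a j • Finsupp.single (σ j) (1 : ℤ)) (j : ι) :
    cbCoeff Δ Vf k x (σ j) = a j := by
  rw [morseCoboundary_single hx, hcrit, Finset.sum_image hσ.injOn] at ha
  simpa [Finsupp.finsetSum_apply, Finsupp.single_apply, hσ.eq_iff] using
    DFunLike.congr_fun ha (σ j)

end Complexes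

end MorseCancellation

/-- If δ_k^V τ_i = Σ_j a_{ji} σ_j then δ_k^W τ_i = Σ_{j≥1} (a_{ji} - a_{00} a_{0i} a_{j0}) σ_j. -/
theorem statement_12 (Δ : SComplex V) (d k : ℕ)
    (hdim : ∀ σ ∈ Δ.faces, σ.card ≤ d + 1) (hdim' : ∃ σ ∈ Δ.faces, σ.card = d + 1)
    (hk1 : 1 ≤ k) (hkd : k ≤ d)
    (Vf : Finset (Finset V × Finset V)) (hV : IsGVF Δ Vf)
    (σ0 τ0 : Finset V) (hσ0 : σ0 ∈ critC Δ Vf (k + 1)) (hτ0 : τ0 ∈ critC Δ Vf k)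
    (P0 : TrajD Δ Vf k σ0 τ0) (hP0uniq : ∀ Q : TrajD Δ Vf k σ0 τ0, Q = P0)
    (n m : ℕ) (σ : Fin (n + 1) → Finset V) (τ : Fin (m + 1) → Finset V)
    (hσinj : Function.Injective σ) (hτinj : Function.Injective τ)
    (hσzero : σ 0 = σ0) (hτzero : τ 0 = τ0)
    (hcritσ : critC Δ Vf (k + 1) = Finset.image σ Finset.univ)
    (hcritτ : critC Δ Vf k = Finset.image τ Finset.univ)
    (a : Fin (n + 1) → Fin (m + 1) → ℤ)
    (ha : ∀ i : Fin (m + 1), morseCoboundary Δ Vf k (Finsupp.single (τ i) 1) =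
      ∑ j : Fin (n + 1), a j i • Finsupp.single (σ j) (1 : ℤ)) :
    ∀ i : Fin m, morseCoboundary Δ (cancelPair P0) k (Finsupp.single (τ i.succ) 1) =
      ∑ j : Fin n, (a j.succ i.succ - a 0 0 * a 0 i.succ * a j.succ 0) •
        Finsupp.single (σ j.succ) (1 : ℤ) := by
  intro i
  have hne {N : ℕ} {f : Fin (N + 1) → Finset V} (hf : Function.Injective f) (l : Fin N) :
      f l.succ ≠ f 0 := hf.ne l.succ_ne_zero
  have hσmem (j) : σ j ∈ critC Δ Vf (k + 1) := by simp [hcritσ]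
  have hτmem (i) : τ i ∈ critC Δ Vf k := by simp [hcritτ]
  have hcoeff (i j) : cbCoeff Δ Vf k (τ i) (σ j) = a j i :=
    MorseCancellation.cbCoeff_eq_of_morseCoboundary_single hσinj hcritσ (hτmem i) (ha i) j
  subst hσzero hτzero
  rw [MorseCancellation.morseCoboundary_single
      (MorseCancellation.mem_critC_cancelPair P0 (hτmem i.succ) (hne hτinj i)),
    MorseCancellation.critC_cancelPair_succ hk1, hcritσ,
    MorseCancellation.sum_erase_image_univ_zero hσinj]
  refine Finset.sum_congr rfl fun j _ => ?_
  rw [MorseCancellation.cbCoeff_cancelPair hk1 hV hσ0 hτ0 hP0uniq (hτmem i.succ) (hne hτinj i)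
    (hσmem j.succ) (hne hσinj j), hcoeff, hcoeff, hcoeff, hcoeff]
end

section
/- Let Δ be a d-dimensional simplicial complex with a gradient vector field V, let (σ_0^{(k)}, τ_0^{(k−1)}) be a cancellable critical pair with unique V-trajectory P_0, and let W be the gradient vector field obtained by cancelling (σ_0, τ_0) from V. Then for any W-critical k-simplex σ_j, the sum of the weights of all W-trajectories from σ_j to σ_0 equals −w(P_0) times the sum of the weights of all V-trajectories from σ_j to τ_0: Σ_{P a W-trajectory from σ_j to σ_0} w(P) = −w(P_0) · Σ_{P a V-trajectory from σ_j to τ_0} w(P). -/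
open scoped Classical

variable {V : Type*} [LinearOrder V]

/-!
For a field `F` without closed trajectories, let `γ_F(s) = ∑_t (∑_{P : s ⇝ t} w(P)) t`.  If `M` is
the matrix of one-step weights, then `c = γ_F(s)` is the unique solution of `c (1 - M) = s`.  The
`y`-entry of `c (1 - M)` is `c y` if `y` is not the upper simplex of a pair, and is
`⟨y, a⟩` times the coefficient of `a` in `∂c` if `(a, y)` is a pair.

Cancellation alters the pairs only at `β₀ = σ₀, …, β_r`, and replacing the pairs of `V` at these
simplices by those of `W` changes the equation for `c = γ_W(σ_j)` at `σ₀` alone.  Hence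
`γ_W(σ_j) = γ_V(σ_j) + c(σ₀) γ_V(σ₀)`.  As `(τ₀, β_r)` is a pair of `W`, the left-hand side has
coefficient `0` at `τ₀` in its boundary, so `0 = ∑_{P : σ_j ⇝ τ₀} w(P) + c(σ₀) w(P₀)`, where
`w(P₀)² = 1`.

That `W` has no closed trajectories rests on the uniqueness of `P₀`: a trajectory that leaves `P₀`
never reaches `τ₀`, and this survives the reversal of `P₀`.
-/

open scoped SetRel Matrix

section AcyclicRel

variable {X : Type*} {r s : SetRel X X}

/-- A relation is acyclic if it has no closed series of positive length.
This is the shape in which gradient vector fields exclude closed trajectories. -/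
def AcyclicRel (r : SetRel X X) : Prop :=
  ∀ p : RelSeries r, p.head = p.last → p.length = 0

lemma strictAnti_comp_series {β : Type*} [Preorder β] {rank : X → β}
    (hrank : ∀ x y, x ~[r] y → rank y < rank x) (p : RelSeries r) : StrictAnti (rank ∘ p) :=
  Fin.strictAnti_iff_succ_lt.2 fun i => hrank _ _ (p.step i)

lemma acyclicRel_of_rank {β : Type*} [Preorder β] {rank : X → β}
    (hrank : ∀ x y, x ~[r] y → rank y < rank x) : AcyclicRel r := by
  intro p hp
  by_contra hlen
  have hlt : rank p.last < rank p.head :=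
    strictAnti_comp_series hrank p (Fin.pos_iff_ne_zero.2 fun h => hlen (congrArg Fin.val h))
  exact (hp ▸ hlt).false

lemma AcyclicRel.exists_rank (hr : AcyclicRel r) :
    ∃ rank : X → Set X, ∀ x y, x ~[r] y → rank y ⊂ rank x := by
  refine ⟨fun x => {z | ∃ p : RelSeries r, p.head = x ∧ p.last = z}, fun x y hxy =>
    (Set.ssubset_iff_of_subset ?_).2 ⟨x, ⟨RelSeries.singleton r x, rfl, rfl⟩, ?_⟩⟩
  · rintro z ⟨p, rfl, rfl⟩
    exact ⟨p.cons x hxy, by simp, by simp⟩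
  · rintro ⟨p, rfl, rfl⟩
    exact absurd (hr (p.cons _ hxy) (by simp)) (by simp)

lemma AcyclicRel.injective (hr : AcyclicRel r) (p : RelSeries r) : Function.Injective p := by
  obtain ⟨rank, hrank⟩ := hr.exists_rank
  exact (strictAnti_comp_series hrank p).injective.of_comp

/-- Reversing a path: order first by "on `b`, later is higher; off `b`, `U` is above and the
complement of `U` is below the whole of `b`", and only then by the rank of `r`. -/
lemma AcyclicRel.of_reversed_series (hr : AcyclicRel r) {b : RelSeries r} {U : Set X}
    (hU : ∀ x y, x ~[r] y → y ∈ U → x ∈ U)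
    (off : ∀ x y, x ~[s] y → y ∉ Set.range b → x ~[r] y)
    (into : ∀ x i, x ~[s] b i → x ∈ U)
    (exit : ∀ i y, b i ~[r] y → y ∈ U → y ∈ Set.range b)
    (on : ∀ i j, b i ~[s] b j → j < i) : AcyclicRel s := by
  obtain ⟨rank, hrank⟩ := hr.exists_rank
  let level : X → ℕ := Function.extend b (fun i => i + 1) fun x =>
    if x ∈ U then b.length + 2 else 0
  have level_on (i) : level (b i) = i + 1 := (hr.injective b).extend_apply _ _ i
  have level_off {x} (hx : x ∉ Set.range b) : level x = if x ∈ U then b.length + 2 else 0 :=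
    Function.extend_apply' _ _ x hx
  refine acyclicRel_of_rank (rank := fun x => toLex (level x, rank x)) fun x y hxy =>
    Prod.Lex.toLex_lt_toLex.2 ?_
  by_cases hy : y ∈ Set.range b
  · obtain ⟨j, rfl⟩ := hy
    left
    by_cases hx : x ∈ Set.range b
    · obtain ⟨i, rfl⟩ := hx
      have := on i j hxy
      simp only [level_on]
      omega
    · simp only [level_on, level_off hx, if_pos (into x j hxy)]
      omega
  · have hr_xy := off x y hxy hy
    by_cases hx : x ∈ Set.range b
    · obtain ⟨i, rfl⟩ := hx
      left
      simp only [level_on, level_off hy, if_neg fun hyU => hy (exit i y hr_xy hyU)]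
      omega
    · have hUxy := hU x y hr_xy
      have hlt := hrank x y hr_xy
      simp only [level_off hx, level_off hy]
      split_ifs with hyU hxU hxU
      · exact Or.inr ⟨rfl, hlt⟩
      · exact absurd (hUxy hyU) hxU
      · exact Or.inl (by omega)
      · exact Or.inr ⟨rfl, hlt⟩

end AcyclicRel

section PathSums

variable {X R : Type*} [CommSemiring R] {M : Matrix X X R} {r : SetRel X X}

/-- The product of the entries of `M` along the steps of `f`: the weight of a path whose
one-step weights are the entries of `M`. -/
def pathWeight (M : Matrix X X R) {n : ℕ} (f : Fin (n + 1) → X) : R :=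
  ∏ i : Fin n, M (f i.castSucc) (f i.succ)

lemma exists_series_of_pathWeight_ne_zero (hM : ∀ x y, M x y ≠ 0 → x ~[r] y) {n : ℕ}
    {f : Fin (n + 1) → X} (hf : pathWeight M f ≠ 0) :
    ∃ p : RelSeries r, (⟨p.length, p⟩ : Σ n, Fin (n + 1) → X) = ⟨n, f⟩ :=
  ⟨⟨n, f, fun i => hM _ _ fun h => hf (Finset.prod_eq_zero (Finset.mem_univ i) h)⟩, rfl⟩

variable [Fintype X]

lemma AcyclicRel.length_lt_card (hr : AcyclicRel r) (p : RelSeries r) :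
    p.length < Fintype.card X := by
  simpa using Fintype.card_le_of_injective p (hr.injective p)

variable [DecidableEq X]

lemma sum_pathWeight_mul_last (M : Matrix X X R) (c : X → R) (n : ℕ) (s : X) :
    ∑ f : Fin (n + 1) → X with f 0 = s, pathWeight M f * c (f (Fin.last n)) =
      (M ^ n *ᵥ c) s := by
  simp_rw [Finset.sum_filter]
  induction n generalizing s with
  | zero =>
    rw [← (Equiv.funUnique (Fin 1) X).symm.sum_comp]
    simp [pathWeight]
  | succ n ih =>
    rw [pow_succ', ← Matrix.mulVec_mulVec, Matrix.mulVec, dotProduct]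
    simp_rw [← ih]
    rw [← (Fin.consEquiv fun _ : Fin (n + 2) => X).sum_comp, Fintype.sum_prod_type]
    simp only [Fin.consEquiv, Equiv.coe_fn_mk, Fin.cons_zero]
    rw [Finset.sum_eq_single s (fun b _ hb => by simp [hb]) (by simp)]
    simp_rw [Finset.mul_sum, mul_ite, mul_zero]
    rw [Finset.sum_comm]
    refine Finset.sum_congr rfl fun f _ => ?_
    rw [Finset.sum_ite_eq]
    simp [pathWeight, Fin.prod_univ_succ, ← Fin.succ_last, mul_assoc]

lemma AcyclicRel.pow_card_eq_zero (hr : AcyclicRel r) (hM : ∀ x y, M x y ≠ 0 → x ~[r] y) :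
    M ^ Fintype.card X = 0 := by
  ext s t
  calc (M ^ Fintype.card X) s t = (M ^ Fintype.card X *ᵥ Pi.single t 1) s := by simp
    _ = 0 := by
      rw [← sum_pathWeight_mul_last]
      refine Finset.sum_eq_zero fun f _ => mul_eq_zero_of_left (by_contra fun hf => ?_) _
      obtain ⟨p, hp⟩ := exists_series_of_pathWeight_ne_zero hM hf
      exact (hr.length_lt_card p).ne (congrArg Sigma.fst hp)

lemma AcyclicRel.finsum_pathWeight_mul_last (hr : AcyclicRel r)
    (hM : ∀ x y, M x y ≠ 0 → x ~[r] y) (c : X → R) (s : X) :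
    ∑ᶠ p ∈ {p : RelSeries r | p.head = s}, pathWeight M p * c p.last =
      ((∑ n ∈ Finset.range (Fintype.card X), M ^ n) *ᵥ c) s := by
  let e : RelSeries r → Σ n, Fin (n + 1) → X := fun p => ⟨p.length, p⟩
  have he : Function.Injective e := fun p q h => by
    cases p; cases q; cases h; rfl
  let g : (Σ n, Fin (n + 1) → X) → R := fun f => pathWeight M f.2 * c (f.2 (Fin.last _))
  let A : Finset (Σ n, Fin (n + 1) → X) := (Finset.range (Fintype.card X)).sigma fun n =>
    {f : Fin (n + 1) → X | f 0 = s}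
  have mem_iff : ∀ f ∈ Function.support g, f ∈ e '' {p | p.head = s} ↔ f ∈ (A : Set _) := by
    rintro f hf
    obtain ⟨p, rfl⟩ : ∃ p, e p = f :=
      exists_series_of_pathWeight_ne_zero hM (left_ne_zero_of_mul hf)
    have hp : p.length < Fintype.card X ∧ p.head = s ↔ e p ∈ (A : Set _) := by
      simp [A, e, RelSeries.head]
    rw [he.mem_set_image, ← hp]
    exact (and_iff_right (hr.length_lt_card p)).symm
  calc ∑ᶠ p ∈ {p : RelSeries r | p.head = s}, g (e p)
      = ∑ᶠ f ∈ e '' {p | p.head = s}, g f := (finsum_mem_image he.injOn).symm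
    _ = ∑ᶠ f ∈ (A : Set _), g f := finsum_mem_inter_support_eq' g _ _ mem_iff
    _ = ∑ f ∈ A, g f := finsum_mem_coe_finset g A
    _ = ∑ n ∈ Finset.range (Fintype.card X), (M ^ n *ᵥ c) s := by
      rw [Finset.sum_sigma]
      exact Finset.sum_congr rfl fun n _ => sum_pathWeight_mul_last M c n s
    _ = _ := by rw [Matrix.sum_mulVec, Finset.sum_apply]

lemma AcyclicRel.finsum_pathWeight_mul_last_comp (hr : AcyclicRel r)
    (hM : ∀ x y, M x y ≠ 0 → x ~[r] y) {c : X → R} {s : X} {T : Type*} {e : T → RelSeries r}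
    (he : Function.Injective e)
    (hrange : ∀ p : RelSeries r, c p.last ≠ 0 → (p ∈ Set.range e ↔ p.head = s)) :
    ∑ᶠ t, pathWeight M (e t) * c (e t).last =
      ((∑ n ∈ Finset.range (Fintype.card X), M ^ n) *ᵥ c) s := by
  rw [← hr.finsum_pathWeight_mul_last hM,
    ← finsum_mem_range (f := fun p : RelSeries r => pathWeight M p * c p.last) he]
  exact finsum_mem_inter_support_eq' _ _ _ fun p hp => hrange p (right_ne_zero_of_mul hp)

end PathSums

section Incidence

lemma covBy_iff_ssubset_and_card_eq {α : Type*} {s t : Finset α} :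
    s ⋖ t ↔ s ⊂ t ∧ t.card = s.card + 1 := by
  refine ⟨fun h => ⟨h.lt, (Order.covBy_iff_add_one_eq.1 h.card_finset).symm⟩,
    fun h => Finset.covBy_iff_card_sdiff_eq_one.2 ⟨h.1.subset, ?_⟩⟩
  rw [Finset.card_sdiff_of_subset h.1.subset, h.2, Nat.add_sub_cancel_left]

lemma incidence_ne_zero_iff {σ τ : Finset V} : incidence σ τ ≠ 0 ↔ τ ⋖ σ := by
  simp [incidence, Finset.covBy_iff_card_sdiff_eq_one]

lemma incidence_mul_self {σ τ : Finset V} (h : τ ⋖ σ) : incidence σ τ * incidence σ τ = 1 := by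
  rw [incidence, if_pos (Finset.covBy_iff_card_sdiff_eq_one.1 h), ← mul_pow]
  simp

end Incidence

section Flow

variable {Δ : SComplex V} {F : Finset (Finset V × Finset V)}

/-- The pairs of `F` join faces of `Δ` to their facets, and every simplex is the lower simplex of
at most one pair and the upper simplex of at most one pair.  In contrast with `IsDVF` a simplex
may be both: cancelling `(σ₀, τ₀)` with `τ₀` a vertex paired with `∅` produces such a field. -/
structure IsFaceMatching (Δ : SComplex V) (F : Finset (Finset V × Finset V)) : Prop where
  upper_mem {a y} : (a, y) ∈ F → y ∈ Δ.faces
  covBy {a y} : (a, y) ∈ F → a ⋖ y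
  lower_unique {a a' y} : (a, y) ∈ F → (a', y) ∈ F → a = a'
  upper_unique {a y y'} : (a, y) ∈ F → (a, y') ∈ F → y = y'

lemma IsFaceMatching.lower_mem (hF : IsFaceMatching Δ F) {a y : Finset V} (h : (a, y) ∈ F) :
    a ∈ Δ.faces :=
  Δ.downClosed y (hF.upper_mem h) a (hF.covBy h).le

lemma IsDVF.isFaceMatching (hF : IsDVF Δ F) : IsFaceMatching Δ F where
  upper_mem h := (hF.1 _ h).2.1
  covBy h := covBy_iff_ssubset_and_card_eq.2 (hF.1 _ h).2.2
  lower_unique h h' := by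
    by_contra hne
    exact (hF.2 _ h _ h' (by simpa using hne)).2.2.2 rfl
  upper_unique h h' := by
    by_contra hne
    exact (hF.2 _ h _ h' (by simpa using hne)).1 rfl

/-- `x` is related to `y` if there is a one-step trajectory `x, a, y`.  Series of this relation are
the trajectories, in all dimensions at once, remembered by their upper simplices. -/
def flow (Δ : SComplex V) (F : Finset (Finset V × Finset V)) : SetRel Δ.faces Δ.faces :=
  {p | p.1 ≠ p.2 ∧ ∃ a, (a, p.2.1) ∈ F ∧ a ⋖ p.1.1}

/-- The weights of the one-step trajectories. -/
noncomputable def flowMatrix (Δ : SComplex V) (F : Finset (Finset V × Finset V)) :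
    Matrix Δ.faces Δ.faces ℤ := fun x y =>
  if x = y then 0 else -∑ a ∈ Δ.faces with (a, y.1) ∈ F, incidence x a * incidence y a

lemma IsFaceMatching.flowMatrix_of_mem (hF : IsFaceMatching Δ F) {x y : Δ.faces} {a : Finset V}
    (ha : (a, y.1) ∈ F) (hxy : x ≠ y) :
    flowMatrix Δ F x y = -(incidence x a * incidence y a) := by
  have hpair : ({b ∈ Δ.faces | (b, y.1) ∈ F} : Finset (Finset V)) = {a} := by
    ext b
    simp only [Finset.mem_filter, Finset.mem_singleton]
    exact ⟨fun h => hF.lower_unique h.2 ha, by rintro rfl; exact ⟨hF.lower_mem ha, ha⟩⟩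
  rw [flowMatrix, if_neg hxy, hpair, Finset.sum_singleton]

lemma flow_of_flowMatrix_ne_zero {x y : Δ.faces} (h : flowMatrix Δ F x y ≠ 0) :
    x ~[flow Δ F] y := by
  rw [flowMatrix, ite_ne_left_iff] at h
  obtain ⟨hxy, h⟩ := h
  obtain ⟨a, ha, hne⟩ := Finset.exists_ne_zero_of_sum_ne_zero (neg_ne_zero.1 h.symm)
  exact ⟨hxy, a, (Finset.mem_filter.1 ha).2, incidence_ne_zero_iff.1 (left_ne_zero_of_mul hne)⟩

/-- The coefficient of the simplex `a` in the simplicial boundary of a chain. -/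
noncomputable def boundaryCoeff (Δ : SComplex V) (a : Finset V) : (Δ.faces → ℤ) →ₗ[ℤ] ℤ :=
  Fintype.linearCombination ℤ fun x => incidence x a

lemma boundaryCoeff_apply (a : Finset V) (c : Δ.faces → ℤ) :
    boundaryCoeff Δ a c = ∑ x, c x * incidence x a := rfl

lemma IsFaceMatching.vecMul_one_sub_flowMatrix_of_mem (hF : IsFaceMatching Δ F)
    (c : Δ.faces → ℤ) {a : Finset V} {y : Δ.faces} (ha : (a, y.1) ∈ F) :
    (c ᵥ* (1 - flowMatrix Δ F)) y = boundaryCoeff Δ a c * incidence y a := by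
  have hentry (x : Δ.faces) : (1 - flowMatrix Δ F) x y = incidence x a * incidence y a := by
    rcases eq_or_ne x y with rfl | hxy
    · simp [flowMatrix, incidence_mul_self (hF.covBy ha)]
    · simp [hF.flowMatrix_of_mem ha hxy, hxy]
  simp_rw [boundaryCoeff_apply, Finset.sum_mul, Matrix.vecMul, dotProduct, hentry, mul_assoc]

lemma vecMul_one_sub_flowMatrix_of_forall_notMem (c : Δ.faces → ℤ) {y : Δ.faces}
    (hy : ∀ a, (a, y.1) ∉ F) : (c ᵥ* (1 - flowMatrix Δ F)) y = c y := by
  have hcol : ∀ x, flowMatrix Δ F x y = 0 := by simp [flowMatrix, hy]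
  rw [Matrix.vecMul_sub, Matrix.vecMul_one, Pi.sub_apply, sub_eq_self, Matrix.vecMul, dotProduct]
  simp [hcol]

/-- A discrete vector field in the sense of `IsFaceMatching` without closed trajectories. -/
structure IsAcyclicMatching (Δ : SComplex V) (F : Finset (Finset V × Finset V)) : Prop
    extends IsFaceMatching Δ F where
  acyclic : AcyclicRel (flow Δ F)

/-- The geometric series of `flowMatrix`.  Its row at `s` is the chain of all trajectories that
start at `s`: each face is weighted by the sum of the weights of the trajectories ending there. -/
noncomputable def flowKernel (Δ : SComplex V) (F : Finset (Finset V × Finset V)) :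
    Matrix Δ.faces Δ.faces ℤ :=
  ∑ n ∈ Finset.range (Fintype.card Δ.faces), flowMatrix Δ F ^ n

namespace IsAcyclicMatching

lemma flowMatrix_pow_card (hF : IsAcyclicMatching Δ F) :
    flowMatrix Δ F ^ Fintype.card Δ.faces = 0 :=
  hF.acyclic.pow_card_eq_zero fun _ _ => flow_of_flowMatrix_ne_zero

lemma flowKernel_vecMul_one_sub (hF : IsAcyclicMatching Δ F) (s : Δ.faces) :
    flowKernel Δ F s ᵥ* (1 - flowMatrix Δ F) = Pi.single s 1 := by
  have h : flowKernel Δ F * (1 - flowMatrix Δ F) = 1 := by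
    rw [flowKernel, geom_sum_mul_neg, hF.flowMatrix_pow_card, sub_zero]
  ext y
  exact (congrFun₂ h s y).trans (by simp [Matrix.one_apply, Pi.single_apply, eq_comm])

lemma eq_vecMul_flowKernel (hF : IsAcyclicMatching Δ F) (c : Δ.faces → ℤ) :
    c = (c ᵥ* (1 - flowMatrix Δ F)) ᵥ* flowKernel Δ F := by
  rw [Matrix.vecMul_vecMul, flowKernel, mul_neg_geom_sum, hF.flowMatrix_pow_card, sub_zero,
    Matrix.vecMul_one]

lemma flowKernel_apply_of_forall_notMem (hF : IsAcyclicMatching Δ F) (s : Δ.faces) {y : Δ.faces}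
    (hy : ∀ a, (a, y.1) ∉ F) : flowKernel Δ F s y = (Pi.single s 1 : Δ.faces → ℤ) y :=
  (vecMul_one_sub_flowMatrix_of_forall_notMem _ hy).symm.trans
    (congrFun (hF.flowKernel_vecMul_one_sub s) y)

lemma boundaryCoeff_flowKernel_of_mem (hF : IsAcyclicMatching Δ F) (s : Δ.faces) {a : Finset V}
    {y : Δ.faces} (ha : (a, y.1) ∈ F) :
    boundaryCoeff Δ a (flowKernel Δ F s) = (Pi.single s 1 : Δ.faces → ℤ) y * incidence y a := by
  rw [← hF.flowKernel_vecMul_one_sub, hF.vecMul_one_sub_flowMatrix_of_mem _ ha, mul_assoc,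
    incidence_mul_self (hF.covBy ha), mul_one]

end IsAcyclicMatching

end Flow

section Trajectories

variable {Δ : SComplex V} {F : Finset (Finset V × Finset V)} {q : ℕ} {s t : Finset V}

/-- The series of upper simplices of a trajectory. -/
def Traj.toSeries (P : Traj Δ F q s t) : RelSeries (flow Δ F) where
  length := P.r
  toFun i := ⟨P.β i, P.βmem i⟩
  step i := ⟨fun h => P.βne i (congrArg Subtype.val h).symm, P.α i, P.vpair i,
    covBy_iff_ssubset_and_card_eq.2 ⟨P.sub i, by rw [P.βcard, P.αcard]⟩⟩

/-- The series of upper simplices of a trajectory that ends at a lower simplex. -/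
def TrajD.toSeries (P : TrajD Δ F q s t) : RelSeries (flow Δ F) where
  length := P.r
  toFun i := ⟨P.β i, P.βmem i⟩
  step i := ⟨fun h => P.βne i (congrArg Subtype.val h).symm, P.α i.castSucc, P.vpair i,
    covBy_iff_ssubset_and_card_eq.2 ⟨P.sub i.castSucc, by rw [P.βcard, P.αcard]⟩⟩

lemma TrajD.α_covBy_β (P : TrajD Δ F q s t) (i : Fin (P.r + 1)) : P.α i ⋖ P.β i :=
  covBy_iff_ssubset_and_card_eq.2 ⟨P.sub i, by rw [P.βcard, P.αcard]⟩

lemma TrajD.wTD_mul_self (hF : IsFaceMatching Δ F) (P : TrajD Δ F q s t) : wTD P * wTD P = 1 := by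
  have hstep (i : Fin P.r) := incidence_mul_self (P.α_covBy_β i.castSucc)
  have hpair (i : Fin P.r) := incidence_mul_self (hF.covBy (P.vpair i))
  rw [wTD, mul_mul_mul_comm, incidence_mul_self (P.α_covBy_β _), ← Finset.prod_mul_distrib, mul_one]
  refine Finset.prod_eq_one fun i _ => ?_
  rw [neg_mul_neg, mul_mul_mul_comm, hstep, hpair, mul_one]

lemma Traj.toSeries_injective (hF : IsFaceMatching Δ F) :
    Function.Injective (Traj.toSeries : Traj Δ F q s t → _) := by
  rintro ⟨r, β, α, _, _, _, _, _, _, _, hp, _, _⟩ ⟨r', β', α', _, _, _, _, _, _, _, hp', _, _⟩ h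
  obtain rfl : r = r' := congrArg RelSeries.length h
  obtain rfl : β = β' :=
    funext fun i => congrArg Subtype.val (congrFun (eq_of_heq (RelSeries.mk.inj h).2) i)
  obtain rfl : α = α' := funext fun i => hF.lower_unique (hp i) (hp' i)
  rfl

lemma TrajD.toSeries_injective (hF : IsFaceMatching Δ F) :
    Function.Injective (TrajD.toSeries : TrajD Δ F q s t → _) := by
  rintro ⟨r, β, α, _, _, _, _, _, hl, _, hp, _, _⟩ ⟨r', β', α', _, _, _, _, _, hl', _, hp', _, _⟩ h
  obtain rfl : r = r' := congrArg RelSeries.length h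
  obtain rfl : β = β' :=
    funext fun i => congrArg Subtype.val (congrFun (eq_of_heq (RelSeries.mk.inj h).2) i)
  obtain rfl : α = α' := by
    funext i
    induction i using Fin.lastCases with
    | last => exact hl.trans hl'.symm
    | cast i => exact hF.lower_unique (hp i) (hp' i)
  rfl

namespace IsFaceMatching

lemma card_eq_of_flow (hF : IsFaceMatching Δ F) {x y : Δ.faces} (h : x ~[flow Δ F] y) :
    y.1.card = x.1.card := by
  obtain ⟨-, a, hay, hax⟩ := h
  rw [(covBy_iff_ssubset_and_card_eq.1 (hF.covBy hay)).2, (covBy_iff_ssubset_and_card_eq.1 hax).2]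

lemma card_apply_series (hF : IsFaceMatching Δ F) (p : RelSeries (flow Δ F))
    (i : Fin (p.length + 1)) : (p i).1.card = p.head.1.card := by
  induction i using Fin.induction with
  | zero => rfl
  | succ i ih => rw [hF.card_eq_of_flow (p.step i), ih]

lemma exists_lower (hF : IsFaceMatching Δ F) (p : RelSeries (flow Δ F)) :
    ∃ α : Fin p.length → Finset V, (∀ i, (α i, (p i.succ).1) ∈ F) ∧
      (∀ i, α i ⋖ (p i.castSucc).1) ∧ ∀ i j, α i = α j → p i.succ = p j.succ := by
  choose _ α hpair hcov using p.step
  exact ⟨α, hpair, hcov, fun i j h => Subtype.ext (hF.upper_unique (hpair i) (h ▸ hpair j))⟩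

lemma exists_toSeries_eq (hF : IsFaceMatching Δ F) (p : RelSeries (flow Δ F))
    (hs : p.head.1 = s) (ht : p.last.1 = t) (hcard : s.card = q + 1) :
    ∃ P : Traj Δ F q s t, P.toSeries = p := by
  obtain ⟨α, hpair, hcov, huniq⟩ := hF.exists_lower p
  have hβ i : (p i).1.card = q + 1 := hF.card_apply_series p i ▸ hs ▸ hcard
  have hα i : (α i).card = q := by
    have := (covBy_iff_ssubset_and_card_eq.1 (hcov i)).2
    have := hβ i.castSucc
    omega
  exact ⟨
    { r := p.length
      β := fun i => p i
      α := α
      βmem := fun i => (p i).2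
      αmem := fun i => hF.lower_mem (hpair i)
      βcard := hβ
      αcard := hα
      first := hs
      last := ht
      sub := fun i => (hcov i).lt
      vpair := hpair
      αne := fun i hi h => (p.step ⟨i + 1, hi⟩).1 (huniq _ i h).symm
      βne := fun i h => (p.step i).1 (Subtype.ext h.symm) }, rfl⟩

lemma exists_toSeries_eq_of_covBy (hF : IsFaceMatching Δ F) (p : RelSeries (flow Δ F))
    (hs : p.head.1 = s) (hcard : s.card = q + 1) (ht : ∀ y, (t, y) ∉ F) (hlast : t ⋖ p.last.1) :
    ∃ P : TrajD Δ F q s t, P.toSeries = p := by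
  obtain ⟨α, hpair, hcov, huniq⟩ := hF.exists_lower p
  have hβ i : (p i).1.card = q + 1 := hF.card_apply_series p i ▸ hs ▸ hcard
  let α' : Fin (p.length + 1) → Finset V := Fin.snoc α t
  have hcast i : α' i.castSucc = α i := Fin.snoc_castSucc (α := fun _ => Finset V) t α i
  have hlast' : α' (Fin.last _) = t := Fin.snoc_last (α := fun _ => Finset V) t α
  have hα' : ∀ i, α' i ⋖ (p i).1 := by
    intro i
    induction i using Fin.lastCases with
    | last => exact hlast'.symm ▸ hlast
    | cast i => exact hcast i ▸ hcov i
  have hα i : (α' i).card = q := by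
    have := (covBy_iff_ssubset_and_card_eq.1 (hα' i)).2
    have := hβ i
    omega
  exact ⟨
    { r := p.length
      β := fun i => p i
      α := α'
      βmem := fun i => (p i).2
      αmem := fun i => Δ.downClosed _ (p i).2 _ (hα' i).le
      βcard := hβ
      αcard := hα
      first := hs
      last := hlast'
      sub := fun i => (hα' i).lt
      vpair := fun i => (hcast i).symm ▸ hpair i
      αne := fun i h => by
        obtain ⟨j, hj⟩ | hj := i.succ.eq_castSucc_or_eq_last
        · rw [hj, hcast, hcast] at h
          exact (p.step j).1 (hj ▸ huniq i j h.symm)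
        · rw [hj, hlast', hcast] at h
          exact ht _ (h ▸ hpair i)
      βne := fun i h => (p.step i).1 (Subtype.ext h.symm) }, rfl⟩

end IsFaceMatching

lemma IsGVF.isAcyclicMatching (hF : IsGVF Δ F) : IsAcyclicMatching Δ F where
  toIsFaceMatching := hF.1.isFaceMatching
  acyclic p hp := by
    by_contra hlen
    have ⟨_, a, hay, _⟩ := p.step ⟨0, Nat.pos_of_ne_zero hlen⟩
    have hcard : p.head.1.card = p.head.1.card - 1 + 1 := by
      rw [← hF.1.isFaceMatching.card_apply_series p (Fin.succ ⟨0, Nat.pos_of_ne_zero hlen⟩),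
        (covBy_iff_ssubset_and_card_eq.1 (hF.1.isFaceMatching.covBy hay)).2, Nat.add_sub_cancel]
    obtain ⟨P, hP⟩ := hF.1.isFaceMatching.exists_toSeries_eq p rfl (congrArg _ hp.symm) hcard
    exact hF.2 ⟨_, _, P, Nat.pos_of_ne_zero fun h => hlen ((congrArg _ hP).symm.trans h)⟩

lemma Traj.wT_eq_pathWeight (hF : IsFaceMatching Δ F) (P : Traj Δ F q s t) :
    wT P = pathWeight (flowMatrix Δ F) P.toSeries :=
  Finset.prod_congr rfl fun i _ =>
    (hF.flowMatrix_of_mem (y := P.toSeries i.succ) (P.vpair i) (P.toSeries.step i).1).symm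

lemma TrajD.wTD_eq_pathWeight_mul (hF : IsFaceMatching Δ F) (P : TrajD Δ F q s t) :
    wTD P = pathWeight (flowMatrix Δ F) P.toSeries * incidence P.toSeries.last t := by
  rw [wTD, P.last]
  refine congrArg (· * _) (Finset.prod_congr rfl fun i _ => ?_)
  exact (hF.flowMatrix_of_mem (y := P.toSeries i.succ) (P.vpair i) (P.toSeries.step i).1).symm

namespace IsAcyclicMatching

lemma finsum_wT (hF : IsAcyclicMatching Δ F) {s t : Δ.faces} (hs : s.1.card = q + 1) :
    ∑ᶠ P : Traj Δ F q s t, wT P = flowKernel Δ F s t := by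
  have hlast (P : Traj Δ F q s t) : P.toSeries.last = t := Subtype.ext P.last
  have hrange (p : RelSeries (flow Δ F)) (hp : (Pi.single t 1 : Δ.faces → ℤ) p.last ≠ 0) :
      p ∈ Set.range (Traj.toSeries : Traj Δ F q s t → _) ↔ p.head = s := by
    have hpt : p.last = t := by_contra fun hne => hp (Pi.single_eq_of_ne hne 1)
    refine ⟨?_, fun hps => ?_⟩
    · rintro ⟨P, rfl⟩
      exact Subtype.ext P.first
    · exact hF.exists_toSeries_eq p (congrArg _ hps) (congrArg _ hpt) hs
  calc ∑ᶠ P : Traj Δ F q s t, wT P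
      = ∑ᶠ P : Traj Δ F q s t, pathWeight (flowMatrix Δ F) P.toSeries *
          (Pi.single t 1 : Δ.faces → ℤ) P.toSeries.last :=
        finsum_congr fun P => by
          rw [hlast, Pi.single_eq_same, mul_one, P.wT_eq_pathWeight hF.toIsFaceMatching]
    _ = (flowKernel Δ F *ᵥ Pi.single t 1) s :=
        hF.acyclic.finsum_pathWeight_mul_last_comp (fun _ _ => flow_of_flowMatrix_ne_zero)
          (Traj.toSeries_injective hF.toIsFaceMatching) hrange
    _ = flowKernel Δ F s t := by rw [Matrix.mulVec_single_one, Matrix.col_apply]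

lemma bCoeff_eq_boundaryCoeff (hF : IsAcyclicMatching Δ F) {s : Δ.faces}
    (hs : s.1.card = q + 1) (ht : ∀ y, (t, y) ∉ F) :
    bCoeff Δ F q s t = boundaryCoeff Δ t (flowKernel Δ F s) := by
  have hrange (p : RelSeries (flow Δ F)) (hp : incidence p.last t ≠ 0) :
      p ∈ Set.range (TrajD.toSeries : TrajD Δ F q s t → _) ↔ p.head = s := by
    refine ⟨?_, fun hps => ?_⟩
    · rintro ⟨P, rfl⟩
      exact Subtype.ext P.first
    · exact hF.exists_toSeries_eq_of_covBy p (congrArg _ hps) hs ht (incidence_ne_zero_iff.1 hp)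
  calc bCoeff Δ F q s t
      = ∑ᶠ P : TrajD Δ F q s t, pathWeight (flowMatrix Δ F) P.toSeries *
          incidence P.toSeries.last t :=
        finsum_congr fun P => P.wTD_eq_pathWeight_mul hF.toIsFaceMatching
    _ = (flowKernel Δ F *ᵥ fun x => incidence x t) s :=
        hF.acyclic.finsum_pathWeight_mul_last_comp (c := fun x => incidence x t)
          (fun _ _ => flow_of_flowMatrix_ne_zero)
          (TrajD.toSeries_injective hF.toIsFaceMatching) hrange

end IsAcyclicMatching

end Trajectories

section Cancellation

variable {Δ : SComplex V} {Vf : Finset (Finset V × Finset V)} {k : ℕ} {σ0 τ0 : Finset V}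

namespace TrajD

lemma β_injective (hV : AcyclicRel (flow Δ Vf)) (P : TrajD Δ Vf k σ0 τ0) :
    Function.Injective P.β := fun _ _ h => hV.injective P.toSeries (Subtype.ext h)

lemma mem_range_β_of_α_mem (hV : IsFaceMatching Δ Vf) (hτ0 : ∀ y, (τ0, y) ∉ Vf)
    (P : TrajD Δ Vf k σ0 τ0) {j : Fin (P.r + 1)} {y : Finset V} (h : (P.α j, y) ∈ Vf) :
    y ∈ Set.range P.β := by
  induction j using Fin.lastCases with
  | last => exact absurd (P.last ▸ h) (hτ0 y)
  | cast j => exact ⟨j.succ, hV.upper_unique (P.vpair j) h⟩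

lemma α_injective (hV : IsAcyclicMatching Δ Vf) (hτ0 : ∀ y, (τ0, y) ∉ Vf)
    (P : TrajD Δ Vf k σ0 τ0) : Function.Injective P.α := by
  have hlast (i : Fin P.r) : P.α i.castSucc ≠ P.α (Fin.last _) := fun h =>
    hτ0 _ (P.last ▸ h ▸ P.vpair i)
  intro i j hij
  obtain ⟨i, rfl⟩ | rfl := i.eq_castSucc_or_eq_last <;>
    obtain ⟨j, rfl⟩ | rfl := j.eq_castSucc_or_eq_last
  · have hβ := hV.upper_unique (P.vpair i) (hij ▸ P.vpair j)
    rw [Fin.succ_injective _ (P.β_injective hV.acyclic hβ)]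
  · exact absurd hij (hlast i)
  · exact absurd hij.symm (hlast j)
  · rfl

lemma mem_cancelPair_iff_of_notMem_range (P : TrajD Δ Vf k σ0 τ0) {a y : Finset V}
    (hy : y ∉ Set.range P.β) : (a, y) ∈ cancelPair P ↔ (a, y) ∈ Vf := by
  simp only [Set.mem_range, not_exists] at hy
  simp [cancelPair, hy]

lemma mk_mem_cancelPair (P : TrajD Δ Vf k σ0 τ0) (i : Fin (P.r + 1)) :
    (P.α i, P.β i) ∈ cancelPair P :=
  Finset.mem_union_right _ (Finset.mem_image_of_mem _ (Finset.mem_univ i))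

lemma mem_cancelPair_β_iff (hV : IsAcyclicMatching Δ Vf) (hσ0 : ∀ a, (a, σ0) ∉ Vf)
    (P : TrajD Δ Vf k σ0 τ0) {a : Finset V} {j : Fin (P.r + 1)} :
    (a, P.β j) ∈ cancelPair P ↔ a = P.α j := by
  constructor
  · simp only [cancelPair, Finset.mem_union, Finset.mem_sdiff, Finset.mem_image, Finset.mem_univ,
      true_and, Prod.mk.injEq, not_exists, not_and]
    rintro (⟨hmem, hnot⟩ | ⟨i, rfl, hi⟩)
    · induction j using Fin.cases with
      | zero => exact absurd (P.first ▸ hmem) (hσ0 a)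
      | succ j => exact absurd rfl (hnot j (hV.lower_unique (P.vpair j) hmem))
    · rw [P.β_injective hV.acyclic hi]
  · rintro rfl
    exact P.mk_mem_cancelPair j

lemma isFaceMatching_cancelPair (hV : IsAcyclicMatching Δ Vf) (hσ0 : ∀ a, (a, σ0) ∉ Vf)
    (hτ0 : ∀ y, (τ0, y) ∉ Vf) (P : TrajD Δ Vf k σ0 τ0) : IsFaceMatching Δ (cancelPair P) := by
  have pair_cases {a y} (h : (a, y) ∈ cancelPair P) :
      (∃ j, P.α j = a ∧ P.β j = y) ∨ (a, y) ∈ Vf ∧ y ∉ Set.range P.β := by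
    by_cases hy : y ∈ Set.range P.β
    · obtain ⟨j, rfl⟩ := hy
      exact Or.inl ⟨j, ((P.mem_cancelPair_β_iff hV hσ0).1 h).symm, rfl⟩
    · exact Or.inr ⟨(P.mem_cancelPair_iff_of_notMem_range hy).1 h, hy⟩
  refine ⟨fun h => ?_, fun h => ?_, fun h h' => ?_, fun h h' => ?_⟩
  · obtain ⟨j, -, rfl⟩ | ⟨h, -⟩ := pair_cases h
    · exact P.βmem j
    · exact hV.upper_mem h
  · obtain ⟨j, rfl, rfl⟩ | ⟨h, -⟩ := pair_cases h
    · exact P.α_covBy_β j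
    · exact hV.covBy h
  · obtain ⟨j, rfl, rfl⟩ | ⟨h, hy⟩ := pair_cases h
    · exact ((P.mem_cancelPair_β_iff hV hσ0).1 h').symm
    · exact hV.lower_unique h ((P.mem_cancelPair_iff_of_notMem_range hy).1 h')
  · obtain ⟨j, rfl, rfl⟩ | ⟨h, hy⟩ := pair_cases h <;>
      obtain ⟨j', hα, rfl⟩ | ⟨h', hy'⟩ := pair_cases h'
    · rw [P.α_injective hV hτ0 hα]
    · exact absurd (P.mem_range_β_of_α_mem hV.toIsFaceMatching hτ0 h') hy'
    · exact absurd (P.mem_range_β_of_α_mem hV.toIsFaceMatching hτ0 (hα ▸ h)) hy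
    · exact hV.upper_unique h h'

lemma series_eq_toSeries (hV : IsFaceMatching Δ Vf) (hτ0 : ∀ y, (τ0, y) ∉ Vf)
    {P : TrajD Δ Vf k σ0 τ0} (huniq : ∀ Q : TrajD Δ Vf k σ0 τ0, Q = P)
    {p : RelSeries (flow Δ Vf)} (hs : p.head.1 = σ0) (hlast : τ0 ⋖ p.last.1) :
    p = P.toSeries := by
  obtain ⟨Q, rfl⟩ := hV.exists_toSeries_eq_of_covBy p hs (P.first ▸ P.βcard 0) hτ0 hlast
  rw [huniq Q]

lemma eq_last_of_covBy (hV : IsFaceMatching Δ Vf) (hτ0 : ∀ y, (τ0, y) ∉ Vf)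
    {P : TrajD Δ Vf k σ0 τ0} (huniq : ∀ Q : TrajD Δ Vf k σ0 τ0, Q = P) {i : Fin (P.r + 1)}
    (h : τ0 ⋖ P.β i) : i = Fin.last P.r := by
  have htake : P.toSeries.take i = P.toSeries := series_eq_toSeries hV hτ0 huniq
    ((congrArg Subtype.val (RelSeries.head_take P.toSeries i)).trans P.first)
    ((RelSeries.last_take P.toSeries i).symm ▸ h)
  exact Fin.ext (congrArg RelSeries.length htake)

lemma eq_succ_of_flow (hV : IsFaceMatching Δ Vf) (hτ0 : ∀ y, (τ0, y) ∉ Vf)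
    {P : TrajD Δ Vf k σ0 τ0} (huniq : ∀ Q : TrajD Δ Vf k σ0 τ0, Q = P) {i : Fin (P.r + 1)}
    {p : RelSeries (flow Δ Vf)} (h : P.toSeries i ~[flow Δ Vf] p.head) (hlast : τ0 ⋖ p.last.1) :
    ∃ j : Fin (P.r + 1), (j : ℕ) = i + 1 ∧ P.toSeries j = p.head := by
  have connect : (P.toSeries.take i).last ~[flow Δ Vf] p.head :=
    (RelSeries.last_take P.toSeries i).symm ▸ h
  have hhead : ((P.toSeries.take i).append p connect).head.1 = σ0 := by
    rw [RelSeries.head_append]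
    exact (congrArg Subtype.val (RelSeries.head_take P.toSeries i)).trans P.first
  have heq : (P.toSeries.take i).append p connect = P.toSeries :=
    series_eq_toSeries hV hτ0 huniq hhead (by rwa [RelSeries.last_append])
  have index_eq : ∀ q, q = P.toSeries → ∀ j : Fin (q.length + 1),
      ∃ j' : Fin (P.r + 1), (j' : ℕ) = j ∧ P.toSeries j' = q j := by
    rintro _ rfl j
    exact ⟨j, rfl, rfl⟩
  obtain ⟨j, hj, happ⟩ := index_eq _ heq _
  exact ⟨j, hj, happ.trans (RelSeries.append_apply_right _ p connect 0)⟩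

lemma exists_series_from_β (P : TrajD Δ Vf k σ0 τ0) (i : Fin (P.toSeries.length + 1)) :
    ∃ p : RelSeries (flow Δ Vf), p.head = P.toSeries i ∧ τ0 ⋖ p.last.1 :=
  ⟨P.toSeries.drop i, RelSeries.head_drop _ i, by
    rw [RelSeries.last_drop]
    calc τ0 = P.α (Fin.last P.r) := P.last.symm
      _ ⋖ P.β (Fin.last P.r) := P.α_covBy_β _⟩

lemma exists_series_of_α_covBy (P : TrajD Δ Vf k σ0 τ0) {x : Δ.faces} {j : Fin (P.r + 1)}
    (hx : P.α j ⋖ x.1) : ∃ p : RelSeries (flow Δ Vf), p.head = x ∧ τ0 ⋖ p.last.1 := by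
  induction j using Fin.lastCases with
  | last => exact ⟨RelSeries.singleton _ x, rfl, P.last ▸ hx⟩
  | cast j =>
    obtain ⟨p, hhead, hlast⟩ := P.exists_series_from_β j.succ
    rcases eq_or_ne x (P.toSeries j.succ) with rfl | hne
    · exact ⟨p, hhead, hlast⟩
    · have hstep : x ~[flow Δ Vf] p.head := by
        rw [hhead]
        exact ⟨hne, _, P.vpair j, hx⟩
      exact ⟨p.cons x hstep, by simp, by simpa using hlast⟩

lemma lt_of_α_covBy_β (hV : IsAcyclicMatching Δ Vf) (hτ0 : ∀ y, (τ0, y) ∉ Vf)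
    {P : TrajD Δ Vf k σ0 τ0} (huniq : ∀ Q : TrajD Δ Vf k σ0 τ0, Q = P) {i j : Fin (P.r + 1)}
    (hij : i ≠ j) (h : P.α j ⋖ P.β i) : j < i := by
  induction j using Fin.lastCases with
  | last =>
    rw [P.last] at h
    exact absurd (eq_last_of_covBy hV.toIsFaceMatching hτ0 huniq h) hij
  | cast j =>
    rcases eq_or_ne i j.succ with rfl | hne
    · exact Fin.castSucc_lt_succ
    · obtain ⟨p, hhead, hlast⟩ := P.exists_series_from_β j.succ
      have hstep : P.toSeries i ~[flow Δ Vf] P.toSeries j.succ :=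
        ⟨(hV.acyclic.injective P.toSeries).ne hne, _, P.vpair j, h⟩
      obtain ⟨l, hl, heq⟩ :=
        eq_succ_of_flow hV.toIsFaceMatching hτ0 huniq (hhead.symm ▸ hstep) hlast
      have hlj : l = j.succ := hV.acyclic.injective P.toSeries (heq.trans hhead)
      exact absurd (Fin.ext (by simpa [hlj] using hl.symm)) hij

lemma isAcyclicMatching_cancelPair (hV : IsAcyclicMatching Δ Vf) (hσ0 : ∀ a, (a, σ0) ∉ Vf)
    (hτ0 : ∀ y, (τ0, y) ∉ Vf) {P : TrajD Δ Vf k σ0 τ0}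
    (huniq : ∀ Q : TrajD Δ Vf k σ0 τ0, Q = P) : IsAcyclicMatching Δ (cancelPair P) where
  toIsFaceMatching := P.isFaceMatching_cancelPair hV hσ0 hτ0
  acyclic := by
    -- `U` is the set of simplices from which some trajectory reaches `τ0`.
    refine hV.acyclic.of_reversed_series (b := P.toSeries)
      (U := {x | ∃ p : RelSeries (flow Δ Vf), p.head = x ∧ τ0 ⋖ p.last.1}) ?_ ?_ ?_ ?_ ?_
    · rintro x y hxy ⟨p, rfl, hp⟩
      exact ⟨p.cons x hxy, by simp, by simpa using hp⟩
    · rintro x y ⟨hne, a, hay, hax⟩ hy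
      have hyβ : y.1 ∉ Set.range P.β := fun ⟨i, hi⟩ => hy ⟨i, Subtype.ext hi⟩
      exact ⟨hne, a, (P.mem_cancelPair_iff_of_notMem_range hyβ).1 hay, hax⟩
    · rintro x j ⟨-, a, haj, hax⟩
      obtain rfl := (P.mem_cancelPair_β_iff hV hσ0).1 haj
      exact P.exists_series_of_α_covBy hax
    · rintro i y hiy ⟨p, rfl, hp⟩
      obtain ⟨j, -, hj⟩ := eq_succ_of_flow hV.toIsFaceMatching hτ0 huniq hiy hp
      exact ⟨j, hj⟩
    · rintro i j ⟨hne, a, haj, hai⟩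
      obtain rfl := (P.mem_cancelPair_β_iff hV hσ0).1 haj
      exact lt_of_α_covBy_β hV hτ0 huniq (fun h => hne (congrArg P.toSeries h)) hai

end TrajD

lemma vecMul_one_sub_flowMatrix_flowKernel_cancelPair (hV : IsAcyclicMatching Δ Vf)
    {P : TrajD Δ Vf k σ0 τ0} (hσ0 : ∀ a, (a, σ0) ∉ Vf)
    (hW : IsAcyclicMatching Δ (cancelPair P)) {s s0 : Δ.faces} (hs0 : s0.1 = σ0)
    (hs : s.1 ∉ Set.range P.β) :
    flowKernel Δ (cancelPair P) s ᵥ* (1 - flowMatrix Δ Vf) =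
      Pi.single s 1 + flowKernel Δ (cancelPair P) s s0 • Pi.single s0 1 := by
  ext y
  rw [Pi.add_apply, Pi.smul_apply, smul_eq_mul]
  by_cases hyβ : y.1 ∈ Set.range P.β
  · obtain ⟨i, hi⟩ := hyβ
    have hys : y ≠ s := fun h => hs ⟨i, by rw [hi, h]⟩
    rw [Pi.single_eq_of_ne hys, zero_add]
    induction i using Fin.cases with
    | zero =>
      obtain rfl : y = s0 := Subtype.ext (by rw [← hi, P.first, hs0])
      rw [vecMul_one_sub_flowMatrix_of_forall_notMem _ (hs0 ▸ hσ0), Pi.single_eq_same, mul_one]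
    | succ i =>
      have hαy : (P.α i.castSucc, y.1) ∈ Vf := hi ▸ P.vpair i
      have hboundary : boundaryCoeff Δ (P.α i.castSucc) (flowKernel Δ (cancelPair P) s) = 0 := by
        rw [hW.boundaryCoeff_flowKernel_of_mem s (y := P.toSeries i.castSucc)
          (P.mk_mem_cancelPair i.castSucc), Pi.single_eq_of_ne, zero_mul]
        exact fun h => hs ⟨i.castSucc, congrArg Subtype.val h⟩
      have hys0 : y ≠ s0 := fun h => hσ0 _ (hs0 ▸ h ▸ hαy)
      rw [hV.vecMul_one_sub_flowMatrix_of_mem _ hαy, hboundary, zero_mul,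
        Pi.single_eq_of_ne hys0, mul_zero]
  · have hys0 : y ≠ s0 := fun h => hyβ ⟨0, by rw [h, hs0, P.first]⟩
    rw [Pi.single_eq_of_ne hys0, mul_zero, add_zero]
    by_cases hy : ∃ a, (a, y.1) ∈ Vf
    · obtain ⟨a, ha⟩ := hy
      rw [hV.vecMul_one_sub_flowMatrix_of_mem _ ha, hW.boundaryCoeff_flowKernel_of_mem s
        ((P.mem_cancelPair_iff_of_notMem_range hyβ).2 ha), mul_assoc,
        incidence_mul_self (hV.covBy ha), mul_one]
    · rw [not_exists] at hy
      rw [vecMul_one_sub_flowMatrix_of_forall_notMem _ hy, hW.flowKernel_apply_of_forall_notMem]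
      exact fun a ha => hy a ((P.mem_cancelPair_iff_of_notMem_range hyβ).1 ha)

lemma flowKernel_cancelPair (hV : IsAcyclicMatching Δ Vf)
    {P : TrajD Δ Vf k σ0 τ0} (hσ0 : ∀ a, (a, σ0) ∉ Vf)
    (hW : IsAcyclicMatching Δ (cancelPair P)) {s s0 : Δ.faces} (hs0 : s0.1 = σ0)
    (hs : s.1 ∉ Set.range P.β) :
    flowKernel Δ (cancelPair P) s =
      flowKernel Δ Vf s + flowKernel Δ (cancelPair P) s s0 • flowKernel Δ Vf s0 := by
  have h := hV.eq_vecMul_flowKernel (flowKernel Δ (cancelPair P) s)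
  rwa [vecMul_one_sub_flowMatrix_flowKernel_cancelPair hV hσ0 hW hs0 hs, Matrix.add_vecMul,
    Matrix.smul_vecMul, Matrix.single_one_vecMul, Matrix.single_one_vecMul] at h

theorem statement_13_general (hV : IsAcyclicMatching Δ Vf) (hσ0 : ∀ a, (a, σ0) ∉ Vf)
    (hτ0 : ∀ y, (τ0, y) ∉ Vf) (P0 : TrajD Δ Vf k σ0 τ0)
    (hP0uniq : ∀ Q : TrajD Δ Vf k σ0 τ0, Q = P0) {σj : Finset V} (hσj : σj ∈ Δ.faces)
    (hcard : σj.card = k + 1) (hσjβ : σj ∉ Set.range P0.β) :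
    (∑ᶠ P : Traj Δ (cancelPair P0) k σj σ0, wT P) =
      -wTD P0 * ∑ᶠ P : TrajD Δ Vf k σj τ0, wTD P := by
  have hW := TrajD.isAcyclicMatching_cancelPair hV hσ0 hτ0 hP0uniq
  let s : Δ.faces := ⟨σj, hσj⟩
  let s0 : Δ.faces := ⟨σ0, P0.first ▸ P0.βmem 0⟩
  have hboundary_W : boundaryCoeff Δ τ0 (flowKernel Δ (cancelPair P0) s) = 0 := by
    have hmem : (τ0, P0.β (Fin.last _)) ∈ cancelPair P0 := by
      simpa only [P0.last] using P0.mk_mem_cancelPair (Fin.last _)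
    rw [hW.boundaryCoeff_flowKernel_of_mem s (y := P0.toSeries.last) hmem, Pi.single_eq_of_ne,
      zero_mul]
    exact fun h => hσjβ ⟨_, congrArg Subtype.val h⟩
  have hboundary_σj : boundaryCoeff Δ τ0 (flowKernel Δ Vf s) = bCoeff Δ Vf k σj τ0 :=
    (hV.bCoeff_eq_boundaryCoeff hcard hτ0).symm
  have hcard0 : σ0.card = k + 1 := P0.first ▸ P0.βcard 0
  have hboundary_σ0 : boundaryCoeff Δ τ0 (flowKernel Δ Vf s0) = wTD P0 :=
    (hV.bCoeff_eq_boundaryCoeff hcard0 hτ0).symm.trans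
      (finsum_eq_single _ P0 fun Q hQ => absurd (hP0uniq Q) hQ)
  rw [flowKernel_cancelPair hV hσ0 hW (s0 := s0) rfl hσjβ, map_add, map_smul, hboundary_σj,
    hboundary_σ0, smul_eq_mul] at hboundary_W
  rw [hW.finsum_wT (s := s) (t := s0) hcard, ← bCoeff]
  linear_combination wTD P0 * hboundary_W -
    flowKernel Δ (cancelPair P0) s s0 * P0.wTD_mul_self hV.toIsFaceMatching

end Cancellation

section Critical

variable {Δ : SComplex V} {Vf : Finset (Finset V × Finset V)} {c : ℕ} {σ : Finset V}

lemma upper_notMem_of_mem_critC (hc : 2 ≤ c) (hσ : σ ∈ critC Δ Vf c) (a : Finset V) :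
    (a, σ) ∉ Vf := by
  obtain ⟨-, hcard, -, -, h | ⟨h1, -⟩⟩ := Finset.mem_filter.1 hσ
  · exact fun ha => (h _ ha).2 rfl
  · omega

lemma notMem_range_β_of_mem_critC {k : ℕ} {σ0 τ0 : Finset V} {P : TrajD Δ Vf k σ0 τ0} (hc : 2 ≤ c)
    (hσ : σ ∈ critC Δ (cancelPair P) c) : σ ∉ Set.range P.β := by
  rintro ⟨i, rfl⟩
  exact upper_notMem_of_mem_critC hc hσ _ (P.mk_mem_cancelPair i)

lemma lower_notMem_of_mem_critC (hV : IsDVF Δ Vf) (hσ : σ ∈ critC Δ Vf c) (y : Finset V) :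
    (σ, y) ∉ Vf := by
  obtain ⟨-, -, -, ⟨x, hx⟩, h | ⟨-, hσ⟩⟩ := Finset.mem_filter.1 hσ
  · exact fun hy => (h _ hy).1 rfl
  · intro hy
    by_cases hne : ((∅ : Finset V), σ) = (σ, y)
    · exact Finset.notMem_empty x ((Prod.mk.inj hne).1.symm ▸ hx)
    · exact (hV.2 _ hσ _ hy hne).2.2.1 rfl

end Critical

/-- The sum of the weights of all W-trajectories from σⱼ to σ₀ equals -w(P₀) times the
sum of the weights of all V-trajectories from σⱼ to τ₀. -/
theorem statement_13 (Δ : SComplex V) (d k : ℕ)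
    (hdim : ∀ σ ∈ Δ.faces, σ.card ≤ d + 1) (hdim' : ∃ σ ∈ Δ.faces, σ.card = d + 1)
    (hk1 : 1 ≤ k) (hkd : k ≤ d)
    (Vf : Finset (Finset V × Finset V)) (hV : IsGVF Δ Vf)
    (σ0 τ0 : Finset V) (hσ0 : σ0 ∈ critC Δ Vf (k + 1)) (hτ0 : τ0 ∈ critC Δ Vf k)
    (P0 : TrajD Δ Vf k σ0 τ0) (hP0uniq : ∀ Q : TrajD Δ Vf k σ0 τ0, Q = P0)
    (σj : Finset V) (hσj : σj ∈ critC Δ (cancelPair P0) (k + 1)) :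
    (∑ᶠ P : Traj Δ (cancelPair P0) k σj σ0, wT P) =
      -wTD P0 * ∑ᶠ P : TrajD Δ Vf k σj τ0, wTD P := by
  have hk : 2 ≤ k + 1 := by omega
  obtain ⟨hσj_mem, hcard, -⟩ := Finset.mem_filter.1 hσj
  exact statement_13_general hV.isAcyclicMatching (upper_notMem_of_mem_critC hk hσ0)
    (lower_notMem_of_mem_critC hV.1 hτ0) P0 hP0uniq hσj_mem hcard
    (notMem_range_β_of_mem_critC hk hσj)
end
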